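/- arXiv:math/0412124 — 3 statements merged into one kernel-verified Lean document; each statement's English description precedes it below -/
import Mathlib

section
/- Let P be a graded poset, let P ∪ {2̂} denote P with a new maximum element 2̂ adjoined, and define the order- and rank-preserving map z : T(P) → P ∪ {2̂} by z([x,y]) = y and z(1̂_{T(P)}) = 2̂. Then for every chain c = {0̂ = x₀ < x₁ < ⋯ < x_k = 2̂} in P ∪ {2̂}, the number of chains c′ from the minimum element [−1̂,0̂] of T(P) to 1̂_{T(P)} with z(c′) = c equals ∏_{i=1}^{k−1} |[x_{i−1}, x_i]|, where |[x,y]| denotes the number of elements of the interval [x,y] in P. -/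
open scoped TensorProduct

noncomputable section

namespace Tcheb

/-! ### The algebra `R⟨a,b⟩` of ab-polynomials -/

/-- Words in the two noncommuting letters `a` (encoded `true`) and `b` (encoded `false`). -/
abbrev ABWord : Type := FreeMonoid Bool

/-- The ring `R⟨a,b⟩` of polynomials in two noncommuting variables `a` and `b`. -/
abbrev AB (R : Type) [CommRing R] : Type := MonoidAlgebra R ABWord

variable (R : Type) [CommRing R]

/-- The ab-monomial corresponding to a word. -/
def word (l : List Bool) : AB R := MonoidAlgebra.of R ABWord (FreeMonoid.ofList l)

/-- The variable `a`. -/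
def av : AB R := word R [true]
/-- The variable `b`. -/
def bv : AB R := word R [false]
/-- `c = a + b`. -/
def cv : AB R := av R + bv R
/-- `d = ab + ba`. -/
def dv : AB R := av R * bv R + bv R * av R
/-- `a - b`. -/
def ev : AB R := av R - bv R

/-- The linear map defined by prescribing values on the basis of ab-monomials. -/
def onBasis {M : Type} [AddCommMonoid M] [Module R M] (f : List Bool → M) :
    AB R →ₗ[R] M :=
  (Finsupp.lift M R ABWord fun w => f (FreeMonoid.toList w)) ∘ₗ
    (MonoidAlgebra.coeffLinearEquiv R).toLinearMap

/-- The algebra map `A` with `A(a) = 1`, `A(b) = 0`. -/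
def Amap : AB R →ₐ[R] R :=
  MonoidAlgebra.lift R R ABWord (FreeMonoid.lift fun x => if x then (1 : R) else 0)

/-- The coproduct on `R⟨a,b⟩`: on an ab-monomial `u₁ ⋯ u_k` it is
`Σ_{i=1}^k u₁ ⋯ u_{i-1} ⊗ u_{i+1} ⋯ u_k`. -/
def Delta : AB R →ₗ[R] AB R ⊗[R] AB R :=
  onBasis R fun w => ∑ i ∈ Finset.range w.length,
    word R (w.take i) ⊗ₜ[R] word R (w.drop (i + 1))

/-- The linear map `C(u) = 2·A(u) + Σ_u A(u₍₁₎)·A(u₍₂₎)`. -/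
def Cmap : AB R →ₗ[R] R :=
  2 • (Amap R).toLinearMap +
    (LinearMap.mul' R R ∘ₗ
      TensorProduct.map (Amap R).toLinearMap (Amap R).toLinearMap) ∘ₗ Delta R

/-- `κ(u) = A(u)·(a-b)^(deg u)` on homogeneous `u`, extended linearly. -/
def kappa : AB R →ₗ[R] AB R :=
  onBasis R fun w => Amap R (word R w) • ev R ^ w.length

/-- `ν(u) = C(u)·(a-b)^(deg u)` on homogeneous `u`, extended linearly. -/
def nuMap : AB R →ₗ[R] AB R :=
  onBasis R fun w => Cmap R (word R w) • ev R ^ w.length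

end Tcheb

namespace Tcheb

/-- Cutting a word into the list of segments between the (sorted) cut positions. -/
def segments : List Bool → List ℕ → List (List Bool)
  | l, [] => [l]
  | l, i :: rest => l.take i :: segments (l.drop (i + 1)) (rest.map fun j => j - (i + 1))
  termination_by _ cuts => cuts.length
  decreasing_by simp

variable (R : Type) [CommRing R]

/-- For segments `[s₁, …, s_k]` this is `ν(s₁)·b·ν(s₂)·b ⋯ b·ν(s_{k-1})·b·κ(s_k)`. -/
def chainProd : List (List Bool) → AB R
  | [] => 1
  | [s] => kappa R (word R s)
  | s :: rest => nuMap R (word R s) * bv R * chainProd rest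

/-- The Tchebyshev transform (of the first kind) on ab-polynomials:
`T(u) = Σ_{k ≥ 1} Σ_u ν(u₍₁₎)·b·ν(u₍₂₎)·b ⋯ b·ν(u₍ₖ₋₁₎)·b·κ(u₍ₖ₎)`,
where the inner sum is over the `k`-fold coproduct.  On the ab-monomial basis this
is the sum, over all sets of positions of deleted letters, of the corresponding
products over the resulting segments. -/
def Tmap : AB R →ₗ[R] AB R :=
  onBasis R fun w => ∑ S : Finset (Fin w.length),
    chainProd R (segments w ((S.sort (· ≤ ·)).map Fin.val))

/-- The `ω` map on a word: replace each occurrence of `ab` by `2d` and all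
remaining letters by `c`. -/
def omegaWord : List Bool → AB R
  | [] => 1
  | true :: false :: rest => (2 * dv R) * omegaWord rest
  | _ :: rest => cv R * omegaWord rest

/-- The `ω` map of Billera–Ehrenborg–Readdy. -/
def omegaMap : AB R →ₗ[R] AB R := onBasis R fun w => omegaWord R w

/-- The reversal involution `u ↦ u*` of ab-polynomials. -/
def revMap : AB R →ₗ[R] AB R := onBasis R fun w => word R w.reverse

/-- `H*(1) = 0` and `H*(u·a) = H*(u·b) = u`. -/
def Hstar : AB R →ₗ[R] AB R :=
  onBasis R fun w => if w = [] then 0 else word R w.dropLast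

/-- The Tchebyshev transform of the second kind `U(u) = H*(T(u·a))`. -/
def Umap : AB R →ₗ[R] AB R := Hstar R ∘ₗ Tmap R ∘ₗ LinearMap.mulRight R (av R)

/-- `σ(u) = Σ_u κ(u₍₁₎)·b·T(u₍₂₎)`. -/
def sigmaMap : AB R →ₗ[R] AB R :=
  LinearMap.mul' R (AB R) ∘ₗ
    TensorProduct.map (LinearMap.mulRight R (bv R) ∘ₗ kappa R) (Tmap R) ∘ₗ Delta R

/-! ### Graded posets and the ab-index -/

/-- `rk` is a rank function for a bounded poset: `rk ⊥ = 0` and covers raise rank by one. -/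
def IsRankFun (α : Type) [PartialOrder α] [OrderBot α] (rk : α → ℕ) : Prop :=
  rk ⊥ = 0 ∧ ∀ x y : α, x ⋖ y → rk y = rk x + 1

/-- `f` lists the elements of a chain in increasing order with respect to the
strict order relation `lt`. -/
def IsStrictChain {α : Type} (lt : α → α → Prop) {n : ℕ} (f : Fin (n + 1) → α) : Prop :=
  ∀ i j : Fin (n + 1), i < j → lt (f i) (f j)

/-- The weight of a chain `x₀ < x₁ < ⋯ < x_k`:
`(a-b)^{ρ(x₀,x₁)-1}·b·(a-b)^{ρ(x₁,x₂)-1}·b ⋯ b·(a-b)^{ρ(x_{k-1},x_k)-1}`. -/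
def chainWt {α : Type} (rk : α → ℕ) {n : ℕ} (f : Fin (n + 1) → α) : AB R :=
  (List.intersperse (bv R)
    (List.ofFn fun i : Fin n => ev R ^ (rk (f i.succ) - rk (f i.castSucc) - 1))).prod

/-- The ab-index `Ψ` of the graded poset with strict order relation `lt`, rank
function `rk`, minimum `b` and maximum `t`: the sum of the weights of all chains
from `b` to `t`. -/
def PsiRel {α : Type} (lt : α → α → Prop) (rk : α → ℕ) (b t : α) : AB R :=
  ∑ᶠ (n : ℕ), ∑ᶠ (f : Fin (n + 1) → α)
    (_ : IsStrictChain lt f ∧ f 0 = b ∧ f (Fin.last n) = t), chainWt R rk f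

end Tcheb

namespace Tcheb

/-! ### The Tchebyshev transform of a graded poset -/

section TPoset

variable (α : Type) [PartialOrder α] [BoundedOrder α]

/-- The elements `[x,y]` of the Tchebyshev transform: intervals of `P ∪ {-1̂}`,
i.e. pairs `(x,y)` with `x ∈ P ∪ {-1̂}`, `y ∈ P` and `x < y`. -/
def TPel : Type := {p : WithBot α × α // p.1 < (p.2 : WithBot α)}

/-- The underlying set of the Tchebyshev transform `T(P)`: the intervals `[x,y]`
together with a new maximum element (`none`). -/
def TP : Type := Option (TPel α)

/-- The cover relation of the Tchebyshev transform `T(P)`: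
`[x,y] ⋖ [y,w]` and `[x,y] ⋖ [x,w]` whenever `y ⋖ w` in `P`, and `[x,1̂] ⋖ 1̂_{T(P)}`. -/
inductive TPcov : TP α → TP α → Prop
  | up {x : WithBot α} {y w : α} (h1 : x < (y : WithBot α))
      (h2 : (y : WithBot α) < (w : WithBot α)) (hc : y ⋖ w) :
      TPcov (some ⟨(x, y), h1⟩) (some ⟨((y : WithBot α), w), h2⟩)
  | same {x : WithBot α} {y w : α} (h1 : x < (y : WithBot α))
      (h2 : x < (w : WithBot α)) (hc : y ⋖ w) :
      TPcov (some ⟨(x, y), h1⟩) (some ⟨(x, w), h2⟩)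
  | top {x : WithBot α} (h1 : x < ((⊤ : α) : WithBot α)) :
      TPcov (some ⟨(x, (⊤ : α)), h1⟩) none

/-- The strict order relation of `T(P)`, generated by the cover relation. -/
def TPlt : TP α → TP α → Prop := Relation.TransGen (TPcov α)

/-- The order relation of `T(P)`, generated by the cover relation. -/
def TPle : TP α → TP α → Prop := Relation.ReflTransGen (TPcov α)

/-- The minimum element `[-1̂, 0̂]` of `T(P)`. -/
def TPbot : TP α := some ⟨((⊥ : WithBot α), (⊥ : α)), WithBot.bot_lt_coe _⟩

/-- The maximum element `1̂_{T(P)}` of `T(P)`. -/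
def TPtop : TP α := none

/-- The rank function of `T(P)`: `ρ([x,y]) = ρ(y)` and `ρ(1̂_{T(P)}) = ρ(P) + 1`. -/
def TPrk (rk : α → ℕ) : TP α → ℕ
  | some p => rk p.1.2
  | none => rk (⊤ : α) + 1

theorem TPbot_ne_TPtop : TPbot α ≠ TPtop α := Option.some_ne_none _

/-- The map `z : T(P) → P ∪ {2̂}` with `z([x,y]) = y` and `z(1̂_{T(P)}) = 2̂`. -/
def zmap : TP α → WithTop α
  | some p => (p.1.2 : WithTop α)
  | none => ⊤

/-- The number of elements of the interval `[u,v]` of `P`, for `u, v ∈ P ∪ {2̂}`. -/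
def intervalCard (u v : WithTop α) : ℕ :=
  Set.ncard {t : α | u ≤ (t : WithTop α) ∧ (t : WithTop α) ≤ v}

end TPoset

/-! ### The dual diamond product -/

/-- The strict order relation of the dual diamond product
`P ◇* Q = ((P ∖ {1̂}) × (Q ∖ {1̂})) ∪ {1̂}` (with `none` the new maximum), built from
the order relations `leA, ltA` and `leB, ltB` of the two factors. -/
def dsLT {A B : Type} (leA ltA : A → A → Prop) (leB ltB : B → B → Prop) :
    Option (A × B) → Option (A × B) → Prop
  | some p, some q => (leA p.1 q.1 ∧ leB p.2 q.2) ∧ (ltA p.1 q.1 ∨ ltB p.2 q.2)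
  | some _, none => True
  | none, _ => False

/-! ### EL-labelings -/

/-- The list of edge labels along a chain (given as a list of poset elements). -/
def labelsList {α Λ : Type} (lam : α → α → Λ) (l : List α) : List Λ :=
  (l.zip l.tail).map fun p => lam p.1 p.2

/-- `l` is a maximal (saturated) chain of the interval `[x,y]` with respect to the
cover relation `cov`: it runs from `x` to `y` and every step is a cover. -/
def IsMaxChainList {α : Type} (cov : α → α → Prop) (x y : α) (l : List α) : Prop :=
  l.head? = some x ∧ l.getLast? = some y ∧ l.Chain' cov

/-- An `EL`-labeling of the poset whose cover relation is `cov`, with labels in the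
linearly ordered set `(Λ, lle, llt)`: every interval has a unique rising maximal
chain, which moreover is lexicographically least among all maximal chains of the
interval. -/
def IsELLabeling (α Λ : Type) (lle llt : Λ → Λ → Prop)
    (cov : α → α → Prop) (lam : α → α → Λ) : Prop :=
  ∀ x y : α, Relation.ReflTransGen cov x y →
    ∃ l : List α, (IsMaxChainList cov x y l ∧ (labelsList lam l).Chain' lle) ∧
      (∀ l' : List α, IsMaxChainList cov x y l' →
        (labelsList lam l').Chain' lle → l' = l) ∧
      (∀ l' : List α, IsMaxChainList cov x y l' →
        labelsList lam l = labelsList lam l' ∨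
          List.Lex llt (labelsList lam l) (labelsList lam l'))

/-! ### Eulerian posets -/

/-- A graded poset is Eulerian if every nontrivial interval `[x,y]` has the
same number of elements of even rank as of odd rank. -/
def IsEulerian (α : Type) [PartialOrder α] (rk : α → ℕ) : Prop :=
  ∀ x y : α, x < y →
    Set.ncard {z : α | x ≤ z ∧ z ≤ y ∧ Even (rk z)} =
      Set.ncard {z : α | x ≤ z ∧ z ≤ y ∧ ¬ Even (rk z)}

/-! ### The face lattice of the crosspolytope -/

/-- A face of the `n`-dimensional crosspolytope: a partial sign vector, i.e. the
pair `(S, ε)` of a subset `S ⊆ {1,…,n}` (the set of coordinates where the function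
takes a value `some`) together with a sign function `ε` on `S`. -/
def CrossEl (n : ℕ) : Type := Fin n → Option Bool

/-- `(S,ε) ≤ (T,δ)` iff `S ⊆ T` and `δ` restricted to `S` is `ε`. -/
instance (n : ℕ) : PartialOrder (CrossEl n) where
  le f g := ∀ i s, f i = some s → g i = some s
  le_refl f i s h := h
  le_trans f g h fg gh i s hi := gh i s (fg i s hi)
  le_antisymm f g fg gf := by
    funext i
    cases hf : f i with
    | some s => exact (fg i s hf).symm
    | none =>
      cases hg : g i with
      | some s => exact absurd (gf i s hg) (by simp [hf])
      | none => rfl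

/-- The face lattice of the `n`-dimensional crosspolytope: all partial sign
vectors together with a new maximum element. -/
abbrev Cross (n : ℕ) : Type := WithTop (CrossEl n)

/-- The rank function of the face lattice of the crosspolytope:
`ρ(S,ε) = |S|` and the maximum has rank `n + 1`. -/
def crossRk (n : ℕ) : Cross n → ℕ
  | none => n + 1
  | some f => (Finset.univ.filter fun i : Fin n => (f i).isSome).card

/-- The minimal element (the empty face) of the crosspolytope face lattice. -/
def crossBot (n : ℕ) : Cross n := WithTop.some (fun _ => none)

/-- The maximal element of the crosspolytope face lattice. -/
def crossTop (n : ℕ) : Cross n := ⊤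

/-! ### Quasisymmetric functions -/

/-- The monomial quasisymmetric function `M_{(p₁,…,p_k)}`, as a formal power
series in the countably many commuting variables `t₁, t₂, …` (indexed by `ℕ`). -/
def MQ (R : Type) [CommRing R] (ps : List ℕ) : MvPowerSeries ℕ R :=
  fun m => if ((m.support.sort (· ≤ ·)).map fun i => m i) = ps then 1 else 0

/-- The `t`-part of a monomial in the variables `s` (index `none`) and
`t₁, t₂, …` (indices `some i`). -/
def tpart (m : Option ℕ →₀ ℕ) : ℕ →₀ ℕ :=
  Finsupp.comapDomain some m (Option.some_injective ℕ).injOn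

/-- The type B monomial quasisymmetric function `s^p · M_{(p₁,…,p_k)}`, a formal
power series in the variables `s` (index `none`) and `t₁, t₂, …` (indices `some i`). -/
def MB (R : Type) [CommRing R] (p : ℕ) (ps : List ℕ) : MvPowerSeries (Option ℕ) R :=
  fun m => if m none = p ∧
      (((tpart m).support.sort (· ≤ ·)).map fun i => tpart m i) = ps then 1 else 0

/-- The quasisymmetric function `F(P)` of the graded poset with strict order
relation `lt`, rank function `rk`, minimum `b` and maximum `t`:
`F(P) = Σ_c M_{(ρ(x₀,x₁),…,ρ(x_{k-1},x_k))}` over all chains `c` from `b` to `t`. -/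
def FQ (R : Type) [CommRing R] {α : Type} (lt : α → α → Prop) (rk : α → ℕ)
    (b t : α) : MvPowerSeries ℕ R :=
  ∑ᶠ (n : ℕ), ∑ᶠ (f : Fin (n + 1) → α)
    (_ : IsStrictChain lt f ∧ f 0 = b ∧ f (Fin.last n) = t),
    MQ R (List.ofFn fun i : Fin n => rk (f i.succ) - rk (f i.castSucc))

/-- The type B quasisymmetric function `F_B(P) = Σ_{0̂ < x ≤ 1̂} s^{ρ(x)-1}·F([x,1̂])`,
written as a sum over all chains `0̂ < x₀ < x₁ < ⋯ < x_k = 1̂` of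
`s^{ρ(x₀)-1}·M_{(ρ(x₀,x₁),…,ρ(x_{k-1},x_k))}`. -/
def FB (R : Type) [CommRing R] {α : Type} (lt : α → α → Prop) (rk : α → ℕ)
    (b t : α) : MvPowerSeries (Option ℕ) R :=
  ∑ᶠ (n : ℕ), ∑ᶠ (f : Fin (n + 1) → α)
    (_ : IsStrictChain lt f ∧ lt b (f 0) ∧ f (Fin.last n) = t),
    MB R (rk (f 0) - 1) (List.ofFn fun i : Fin n => rk (f i.succ) - rk (f i.castSucc))

/-! ### Characters and the chain maps -/

/-- A character on `k⟨a,b⟩`: a linear functional which is multiplicative with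
respect to Cartesian products of graded posets (of rank at least 1). -/
def IsCharacter (k : Type) [Field k] (G : AB k →ₗ[k] k) : Prop :=
  ∀ (α β : Type) [Fintype α] [Fintype β] [PartialOrder α] [PartialOrder β]
    [BoundedOrder α] [BoundedOrder β], ∀ (rkα : α → ℕ) (rkβ : β → ℕ),
    IsRankFun α rkα → IsRankFun β rkβ → 1 ≤ rkα ⊤ → 1 ≤ rkβ ⊤ →
    G (PsiRel k (· < ·) (fun p : α × β => rkα p.1 + rkβ p.2)
        ((⊥ : α), (⊥ : β)) ((⊤ : α), (⊤ : β))) =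
      G (PsiRel k (· < ·) rkα ⊥ ⊤) * G (PsiRel k (· < ·) rkβ ⊥ ⊤)

/-- The quasisymmetric function image `g̃F(P)` of the chain map of the second kind:
`Σ_c G(Ψ([x₀,x₁])) ⋯ G(Ψ([x_{k-1},x_k])) · M_{(ρ(x₀,x₁),…,ρ(x_{k-1},x_k))}`,
summed over all chains `c = {b = x₀ < ⋯ < x_k = t}`. -/
def gtF (k : Type) [Field k] (G : AB k →ₗ[k] k) {α : Type} (lt : α → α → Prop)
    (rk : α → ℕ) (b t : α) : MvPowerSeries ℕ k :=
  ∑ᶠ (n : ℕ), ∑ᶠ (f : Fin (n + 1) → α)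
    (_ : IsStrictChain lt f ∧ f 0 = b ∧ f (Fin.last n) = t),
    (∏ i : Fin n, G (PsiRel k lt rk (f i.castSucc) (f i.succ))) •
      MQ k (List.ofFn fun i : Fin n => rk (f i.succ) - rk (f i.castSucc))

/-- The type B quasisymmetric function image `gF_B(P) = Σ_{0̂ < x ≤ 1̂}
s^{ρ(x)-1}·g̃F([x,1̂])` of the chain map of the first kind, written as a sum over
all chains `0̂ < x₀ < ⋯ < x_k = 1̂`. -/
def gFB (k : Type) [Field k] (G : AB k →ₗ[k] k) {α : Type} (lt : α → α → Prop)
    (rk : α → ℕ) (b t : α) : MvPowerSeries (Option ℕ) k :=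
  ∑ᶠ (n : ℕ), ∑ᶠ (f : Fin (n + 1) → α)
    (_ : IsStrictChain lt f ∧ lt b (f 0) ∧ f (Fin.last n) = t),
    (∏ i : Fin n, G (PsiRel k lt rk (f i.castSucc) (f i.succ))) •
      MB k (rk (f 0) - 1) (List.ofFn fun i : Fin n => rk (f i.succ) - rk (f i.castSucc))

/-- The space of homogeneous ab-polynomials of degree `n`. -/
def ABhomog (k : Type) [Field k] (n : ℕ) : Submodule k (AB k) :=
  Submodule.span k {x : AB k | ∃ w : List Bool, w.length = n ∧ x = word k w}

/-! ### Helper lemmas -/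

section Helpers

variable {α : Type} [PartialOrder α] [BoundedOrder α]

/-- Explicit description of the strict order of `T(P)`. -/
def RR : TP α → TP α → Prop
  | some p, some q => p.1.2 < q.1.2 ∧ (p.1.1 = q.1.1 ∨ (p.1.2 : WithBot α) ≤ q.1.1)
  | some _, none => True
  | none, _ => False

theorem RR_of_TPcov {a b : TP α} (h : TPcov α a b) : RR a b := by
  cases h with
  | up h1 h2 hc => exact ⟨hc.lt, Or.inr le_rfl⟩
  | same h1 h2 hc => exact ⟨hc.lt, Or.inl rfl⟩
  | top h1 => trivial

theorem RR_trans {a b c : TP α} (h : RR a b) (h' : RR b c) : RR a c := by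
  rcases a with _ | ⟨⟨x, y⟩, hxy⟩
  · exact h.elim
  rcases b with _ | ⟨⟨x', y'⟩, hxy'⟩
  · exact h'.elim
  rcases c with _ | ⟨⟨x'', y''⟩, hxy''⟩
  · trivial
  obtain ⟨h1, h2⟩ := h
  obtain ⟨h3, h4⟩ := h'
  dsimp only at *
  refine ⟨h1.trans h3, ?_⟩
  dsimp only
  rcases h4 with h4 | h4
  · rw [← h4]; exact h2
  · exact Or.inr (le_trans (WithBot.coe_le_coe.2 h1.le) h4)

theorem RR_of_TPlt {a b : TP α} (h : TPlt α a b) : RR a b := by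
  induction h with
  | single h => exact RR_of_TPcov h
  | tail _ h ih => exact RR_trans ih (RR_of_TPcov h)

theorem covChain [Finite α] {y w : α} (h : y ≤ w) : Relation.ReflTransGen (· ⋖ ·) y w := by
  have := Fintype.ofFinite α
  classical
  letI : LocallyFiniteOrder α := Fintype.toLocallyFiniteOrder
  exact le_iff_reflTransGen_covBy.1 h

theorem le_of_covChain {y w : α} (h : Relation.ReflTransGen (· ⋖ ·) y w) : y ≤ w := by
  induction h with
  | refl => exact le_rfl
  | tail _ h ih => exact ih.trans h.le

theorem TPle_same [Finite α] {x : WithBot α} {y w : α} (h1 : x < (y : WithBot α))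
    (h2 : x < (w : WithBot α)) (h : y ≤ w) :
    Relation.ReflTransGen (TPcov α) (some ⟨(x, y), h1⟩) (some ⟨(x, w), h2⟩) := by
  induction covChain h with
  | refl => exact .refl
  | tail hyb hbc ih =>
    rename_i b c
    have hyb' : y ≤ b := le_of_covChain hyb
    have hb : x < (b : WithBot α) := h1.trans_le (WithBot.coe_le_coe.2 hyb')
    exact (ih hb hyb').tail (TPcov.same hb h2 hbc)

theorem TPlt_of_RR [Finite α] {a b : TP α} (h : RR a b) : TPlt α a b := by
  rcases a with _ | ⟨⟨x, y⟩, hxy⟩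
  · exact h.elim
  rcases b with _ | ⟨⟨x', y'⟩, hxy'⟩
  · have ht : x < ((⊤ : α) : WithBot α) := hxy.trans_le (WithBot.coe_le_coe.2 le_top)
    exact Relation.TransGen.tail' (TPle_same hxy ht le_top) (TPcov.top ht)
  obtain ⟨h1, h2⟩ := h
  dsimp only at h1 h2 hxy hxy'
  rcases h2 with h2 | h2
  · subst h2
    rcases Relation.reflTransGen_iff_eq_or_transGen.1 (TPle_same hxy hxy' h1.le) with h | h
    · have h' : (⟨(x, y'), hxy'⟩ : TPel α) = ⟨(x, y), hxy⟩ := Option.some.inj h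
      have := congrArg (fun p : TPel α => p.1.2) h'
      exact absurd this h1.ne'
    · exact h
  · induction x' using WithBot.recBotCoe with
    | bot => exact absurd h2 (by simp)
    | coe t =>
      have hyt : y ≤ t := WithBot.coe_le_coe.1 h2
      have hty : t < y' := WithBot.coe_lt_coe.1 hxy'
      rcases Relation.ReflTransGen.cases_head (covChain hty.le) with h | ⟨u, htu, huy⟩
      · exact absurd h hty.ne
      have huy' : u ≤ y' := le_of_covChain huy
      have hxt : x < (t : WithBot α) := hxy.trans_le h2
      have htu' : (t : WithBot α) < (u : WithBot α) := WithBot.coe_lt_coe.2 htu.lt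
      have s1 := TPle_same hxy hxt hyt
      have s2 := Relation.TransGen.tail' s1 (TPcov.up hxt htu' htu)
      exact Relation.TransGen.trans_left s2 (TPle_same htu' hxy' huy')

instance [Finite α] : Finite (TP α) := by
  have : Finite (WithBot α) := inferInstanceAs (Finite (Option α))
  have : Finite (TPel α) := inferInstanceAs (Finite (Subtype _))
  exact inferInstanceAs (Finite (Option (TPel α)))

/-- The element `[x,y]` of `T(P)`. -/
def mkT (x : WithBot α) (y : α) (h : x < (y : WithBot α)) : TP α := some ⟨(x, y), h⟩

theorem mkT_inj {x x' : WithBot α} {y y' : α} {h : x < (y : WithBot α)}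
    {h' : x' < (y' : WithBot α)} (e : mkT x y h = mkT x' y' h') : x = x' :=
  congrArg (fun p : TPel α => p.1.1) (Option.some.inj e)

open Classical in
theorem step_count [Finite α] (u v : WithTop α) (huv : u < v) (a : TP α) (ha : zmap α a = u) :
    Set.ncard {b | TPlt α a b ∧ zmap α b = v} = if v = ⊤ then 1 else intervalCard α u v := by
  subst ha
  rcases a with _ | ⟨⟨x, y⟩, hxy⟩
  · exact absurd huv not_top_lt
  induction v using WithTop.recTopCoe with
  | top =>
    rw [if_pos rfl, Set.ncard_eq_one]
    refine ⟨none, ?_⟩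
    ext b
    constructor
    · rintro ⟨-, h⟩
      rcases b with _ | b
      · rfl
      · exact absurd h (WithTop.coe_ne_top)
    · rintro rfl
      exact ⟨TPlt_of_RR trivial, rfl⟩
  | coe w =>
    rw [if_neg WithTop.coe_ne_top, intervalCard]
    have hyw : y < w := WithTop.coe_lt_coe.1 huv
    dsimp only at hxy
    have hxw : x < (w : WithBot α) := hxy.trans (WithBot.coe_lt_coe.2 hyw)
    symm
    refine Set.ncard_congr (fun t ht => if h : t < w then
      mkT (t : WithBot α) w (WithBot.coe_lt_coe.2 h)
      else mkT x w hxw) ?_ ?_ ?_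
    · rintro t ⟨h1, h2⟩
      have h1 : y ≤ t := WithTop.coe_le_coe.1 h1
      split_ifs with h
      · exact ⟨TPlt_of_RR (b := mkT _ _ _) ⟨hyw, Or.inr (WithBot.coe_le_coe.2 h1)⟩, rfl⟩
      · exact ⟨TPlt_of_RR (b := mkT _ _ _) ⟨hyw, Or.inl rfl⟩, rfl⟩
    · rintro t t' ⟨h1, h2⟩ ⟨h1', h2'⟩ heq
      have h1 : y ≤ t := WithTop.coe_le_coe.1 h1
      have h1' : y ≤ t' := WithTop.coe_le_coe.1 h1'
      have h2 : t ≤ w := WithTop.coe_le_coe.1 h2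
      have h2' : t' ≤ w := WithTop.coe_le_coe.1 h2'
      split_ifs at heq with h h' h'
      · have := mkT_inj heq
        exact WithBot.coe_injective this
      · have := mkT_inj heq
        rw [← this] at hxy
        exact absurd h1 (WithBot.coe_lt_coe.1 hxy).not_ge
      · have := mkT_inj heq
        rw [this] at hxy
        exact absurd h1' (WithBot.coe_lt_coe.1 hxy).not_ge
      · rw [h2.eq_of_not_lt h, h2'.eq_of_not_lt h']
    · rintro b ⟨hb, hz⟩
      rcases b with _ | ⟨⟨x', w'⟩, hxw'⟩
      · exact absurd hz (WithTop.top_ne_coe)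
      have hw : w' = w := WithTop.coe_injective hz
      subst hw
      obtain ⟨-, h | h⟩ := RR_of_TPlt hb
      · dsimp only at h
        subst h
        refine ⟨w', ⟨huv.le, le_rfl⟩, ?_⟩
        rw [dif_neg (lt_irrefl _)]; rfl
      · dsimp only at h hxw'
        induction x' using WithBot.recBotCoe with
        | bot => exact absurd h (by simp)
        | coe t =>
          have ht : t < w' := WithBot.coe_lt_coe.1 hxw'
          refine ⟨t, ⟨WithTop.coe_le_coe.2 (WithBot.coe_le_coe.1 h),
            WithTop.coe_le_coe.2 ht.le⟩, ?_⟩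
          rw [dif_pos ht]; rfl

theorem path_count {β : Type} [Finite β] (R : β → β → Prop) :
    ∀ (n : ℕ) (P : Fin (n + 1) → β → Prop) (c : Fin n → ℕ),
    (∀ i : Fin n, ∀ a, P i.castSucc a → Set.ncard {b | R a b ∧ P i.succ b} = c i) →
    ∀ a, P 0 a → Set.ncard {g : Fin (n + 1) → β | g 0 = a ∧
      (∀ i : Fin n, R (g i.castSucc) (g i.succ)) ∧ ∀ i, P i (g i)} = ∏ i, c i := by
  intro n
  induction n with
  | zero =>
    intro P c _ a ha
    rw [Finset.univ_eq_empty, Finset.prod_empty, Set.ncard_eq_one]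
    refine ⟨fun _ => a, ?_⟩
    ext g
    constructor
    · rintro ⟨h, -⟩
      funext i
      rw [Fin.fin_one_eq_zero i]; exact h
    · rintro rfl
      refine ⟨rfl, fun i => i.elim0, fun i => ?_⟩
      rw [Fin.fin_one_eq_zero i]; exact ha
  | succ n ih =>
    intro P c hc a ha
    have := Fintype.ofFinite β
    classical
    let H : β → Set (Fin (n + 1) → β) := fun b => {g | g 0 = b ∧
      (∀ i : Fin n, R (g i.castSucc) (g i.succ)) ∧ ∀ i, P i.succ (g i)}
    have hH : ∀ b, P 1 b → (H b).ncard = ∏ i : Fin n, c i.succ := fun b hb =>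
      ih (fun i => P i.succ) (fun i => c i.succ) (fun i a h => hc i.succ a h) b hb
    let B : Set β := {b | R a b ∧ P 1 b}
    have hB : B.ncard = c 0 := hc 0 a ha
    let e : {g : Fin (n + 1 + 1) → β | g 0 = a ∧
      (∀ i : Fin (n + 1), R (g i.castSucc) (g i.succ)) ∧ ∀ i, P i (g i)} ≃
        Σ b : B, H b.1 :=
      { toFun := fun g => ⟨⟨g.1 1, by
            obtain ⟨g, rfl, h1, h2⟩ := g
            exact ⟨h1 0, h2 1⟩⟩, ⟨Fin.tail g.1, rfl, fun i => g.2.2.1 i.succ,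
              fun i => g.2.2.2 i.succ⟩⟩
        invFun := fun s => ⟨Fin.cons a s.2.1, rfl, by
            obtain ⟨⟨b, hb⟩, ⟨h, hh⟩⟩ := s
            have hb0 : h 0 = b := hh.1
            have h1 := hh.2.1
            have h2 := hh.2.2
            intro i
            refine Fin.cases ?_ (fun j => ?_) i
            · have hb1 : R a b := hb.1
              rw [← hb0] at hb1
              exact hb1
            · exact h1 j, by
            obtain ⟨⟨b, hb⟩, ⟨h, hh⟩⟩ := s
            have hb0 : h 0 = b := hh.1
            have h1 := hh.2.1
            have h2 := hh.2.2
            intro i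
            refine Fin.cases ?_ (fun j => ?_) i
            · exact ha
            · exact h2 j⟩
        left_inv := by
          rintro ⟨g, rfl, h1, h2⟩
          exact Subtype.ext (Fin.cons_self_tail g)
        right_inv := by
          rintro ⟨⟨b, hb⟩, ⟨h, hh⟩⟩
          have hb0 : h 0 = b := hh.1
          subst hb0
          rfl }
    rw [← Nat.card_coe_set_eq, Nat.card_congr e, Nat.card_sigma, Fin.prod_univ_succ, ← hB]
    rw [Finset.sum_congr rfl (fun b _ => (Nat.card_coe_set_eq _).trans (hH b.1 b.2.2))]
    rw [Finset.sum_const, smul_eq_mul, Finset.card_univ, ← Nat.card_eq_fintype_card,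
      Nat.card_coe_set_eq]

theorem strictChain_iff {β : Type} (R : β → β → Prop) (ht : ∀ a b c, R a b → R b c → R a c)
    {n : ℕ} (g : Fin (n + 1) → β) :
    IsStrictChain R g ↔ ∀ i : Fin n, R (g i.castSucc) (g i.succ) := by
  constructor
  · intro h i
    exact h _ _ i.castSucc_lt_succ
  · intro h i j
    refine Fin.induction (motive := fun j => i < j → R (g i) (g j)) ?_ ?_ j
    · intro h; exact absurd h (Fin.not_lt_zero i)
    · intro j ih hij
      rcases (Fin.le_castSucc_iff.2 hij).eq_or_lt with h' | h'
      · rw [h']; exact h j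
      · exact ht _ _ _ (ih h') (h j)

end Helpers

theorem tchebyshev_chain_fiber_count
    (α : Type) [Fintype α] [PartialOrder α] [BoundedOrder α]
    (rk : α → ℕ) (hrk : IsRankFun α rk)
    (k : ℕ) (f : Fin (k + 1) → WithTop α) (hchain : StrictMono f)
    (h0 : f 0 = ((⊥ : α) : WithTop α)) (hlast : f (Fin.last k) = (⊤ : WithTop α)) :
    Set.ncard {g : Fin (k + 1) → TP α |
        IsStrictChain (TPlt α) g ∧ g 0 = TPbot α ∧ g (Fin.last k) = TPtop α ∧
        ∀ i, zmap α (g i) = f i} =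
      ∏ i : Fin (k - 1),
        intervalCard α (f ⟨i.1, by have := i.2; omega⟩)
          (f ⟨i.1 + 1, by have := i.2; omega⟩) := by
  classical
  obtain _ | m := k
  · exact absurd (h0.symm.trans hlast) WithTop.coe_ne_top
  have hset : {g : Fin (m + 1 + 1) → TP α |
        IsStrictChain (TPlt α) g ∧ g 0 = TPbot α ∧ g (Fin.last (m + 1)) = TPtop α ∧
        ∀ i, zmap α (g i) = f i} = {g : Fin (m + 1 + 1) → TP α | g 0 = TPbot α ∧
      (∀ i : Fin (m + 1), TPlt α (g i.castSucc) (g i.succ)) ∧ ∀ i, zmap α (g i) = f i} := by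
    ext g
    simp only [Set.mem_ofPred_eq]
    rw [strictChain_iff (TPlt α) (fun _ _ _ h h' => Relation.TransGen.trans h h')]
    constructor
    · rintro ⟨h1, h2, -, h3⟩
      exact ⟨h2, h1, h3⟩
    · rintro ⟨h2, h1, h3⟩
      refine ⟨h1, h2, ?_, h3⟩
      have := (h3 (Fin.last (m + 1))).trans hlast
      revert this
      rcases g (Fin.last (m + 1)) with _ | b
      · intro _; rfl
      · intro h; exact absurd h WithTop.coe_ne_top
  rw [hset, path_count (TPlt α) (m + 1) (fun i a => zmap α a = f i)
    (fun i => if f i.succ = ⊤ then 1 else intervalCard α (f i.castSucc) (f i.succ))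
    (fun i a ha => step_count _ _ (hchain i.castSucc_lt_succ) a ha) (TPbot α) h0.symm]
  rw [Fin.prod_univ_castSucc, if_pos (by rw [Fin.succ_last]; exact hlast), mul_one]
  refine Finset.prod_congr rfl fun i _ => ?_
  rw [if_neg]
  · rfl
  · rw [← hlast]
    refine (hchain ?_).ne
    rw [Fin.lt_def]
    simp

end Tcheb
end
end

section
/- For every Eulerian poset P, the cd-index Ψ(T(P)) of the Tchebyshev transform T(P) lies in the subring ℤ⟨c,2d⟩ of ℤ⟨a,b⟩ generated by c and 2d; that is, T(P) has a c-2d-index. -/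
open scoped TensorProduct

noncomputable section

namespace Tcheb

/-! ### Recursion for the ab-index -/

section Recursion

variable {T : Type} (lt : T → T → Prop) (rk : T → ℕ) (t : T)

open Classical in
/-- Sum of the weights of the chains with `n` steps from `x` to `t`. -/
def chainSum [Fintype T] (n : ℕ) (x : T) : AB ℤ :=
  ∑ f : Fin (n + 1) → T,
    if IsStrictChain lt f ∧ f 0 = x ∧ f (Fin.last n) = t then chainWt ℤ rk f else 0

theorem strictChain_cons (htr : ∀ x y z, lt x y → lt y z → lt x z) {n : ℕ} (x : T)
    (f : Fin (n + 1) → T) :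
    IsStrictChain lt (Fin.cons x f : Fin (n + 2) → T) ↔ lt x (f 0) ∧ IsStrictChain lt f := by
  constructor
  · intro h
    refine ⟨by simpa using h 0 1 (by simp), ?_⟩
    intro i j hij
    simpa using h i.succ j.succ (by simpa using hij)
  · rintro ⟨h0, h⟩ i j hij
    induction i using Fin.cases with
    | zero =>
      induction j using Fin.cases with
      | zero => exact absurd hij (lt_irrefl _)
      | succ j =>
        simp only [Fin.cons_zero, Fin.cons_succ]
        by_cases hj : j = 0
        · rw [hj]; exact h0
        · exact htr _ _ _ h0 (h 0 j (Fin.pos_of_ne_zero hj))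
    | succ i =>
      induction j using Fin.cases with
      | zero => exact absurd hij (by simp)
      | succ j =>
        simp only [Fin.cons_succ]
        exact h i j (by simpa using hij)

theorem chainWt_cons_zero (x : T) (f : Fin 1 → T) :
    chainWt ℤ rk (Fin.cons x f : Fin 2 → T) = ev ℤ ^ (rk (f 0) - rk x - 1) := by
  simp [chainWt]

theorem chainWt_cons_succ {n : ℕ} (x : T) (f : Fin (n + 2) → T) :
    chainWt ℤ rk (Fin.cons x f : Fin (n + 3) → T) =
      ev ℤ ^ (rk (f 0) - rk x - 1) * bv ℤ * chainWt ℤ rk f := by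
  simp only [chainWt]
  rw [List.ofFn_succ, List.ofFn_succ, List.ofFn_succ]
  simp only [List.intersperse_cons_cons, List.prod_cons, mul_assoc]
  rfl

theorem chainSum_zero [Fintype T] [DecidableEq T] (x : T) :
    chainSum lt rk t 0 x = if x = t then 1 else 0 := by
  classical
  unfold chainSum
  have key : ∀ f : Fin (0 + 1) → T, (if IsStrictChain lt f ∧ f 0 = x ∧ f (Fin.last 0) = t
      then chainWt ℤ rk f else 0) = if f = (fun _ => x) then (if x = t then (1 : AB ℤ) else 0) else 0 := by
    intro f
    have h1 : IsStrictChain lt f := by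
      intro i j hij
      exact absurd hij (by omega)
    have h2 : chainWt ℤ rk f = 1 := by simp [chainWt]
    by_cases hf : f = (fun _ => x)
    · subst hf
      simp [h1, h2]
    · have : f 0 ≠ x := by
        intro h
        apply hf
        funext i
        rw [show i = 0 by omega, h]
      simp [hf, this]
  trans ∑ f : Fin (0 + 1) → T, if f = (fun _ => x) then (if x = t then (1 : AB ℤ) else 0) else 0
  · exact Finset.sum_congr rfl fun f _ => by convert key f
  · simp

theorem chainSum_succ_aux [Fintype T] (htr : ∀ x y z, lt x y → lt y z → lt x z)
    [DecidableRel lt] (n : ℕ) (x : T) (u : T → AB ℤ)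
    (hu : ∀ f : Fin (n + 1) → T, chainWt ℤ rk (Fin.cons x f : Fin (n + 2) → T) =
      u (f 0) * chainWt ℤ rk f) :
    chainSum lt rk t (n + 1) x =
      ∑ z, if lt x z then u z * chainSum lt rk t n z else 0 := by
  classical
  unfold chainSum
  rw [← (Fin.consEquiv (fun _ : Fin (n + 2) => T)).sum_comp, Fintype.sum_prod_type]
  rw [Finset.sum_eq_single x]
  · have h2 : ∀ z, (if lt x z then u z * ∑ f : Fin (n + 1) → T,
        (if IsStrictChain lt f ∧ f 0 = z ∧ f (Fin.last n) = t then chainWt ℤ rk f else 0) else 0)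
        = ∑ f : Fin (n + 1) → T, if f 0 = z then
          (if lt x z ∧ IsStrictChain lt f ∧ f (Fin.last n) = t then u z * chainWt ℤ rk f else 0)
          else 0 := by
      intro z
      by_cases hz : lt x z
      · simp only [hz, if_true, true_and, Finset.mul_sum]
        refine Finset.sum_congr rfl fun f _ => ?_
        by_cases h : f 0 = z <;> simp [h]
      · simp [hz]
    rw [Finset.sum_congr rfl (fun z _ => h2 z), Finset.sum_comm]
    refine Finset.sum_congr rfl fun f _ => ?_
    rw [Finset.sum_ite_eq]
    simp only [Finset.mem_univ, if_true, Fin.consEquiv_apply]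
    have hl : (Fin.cons x f : Fin (n + 2) → T) (Fin.last (n + 1)) = f (Fin.last n) := by
      rw [← Fin.succ_last, Fin.cons_succ]
    change (if IsStrictChain lt (Fin.cons x f : Fin (n + 2) → T) ∧
      (Fin.cons x f : Fin (n + 2) → T) 0 = x ∧
      (Fin.cons x f : Fin (n + 2) → T) (Fin.last (n + 1)) = t then
      chainWt ℤ rk (Fin.cons x f : Fin (n + 2) → T) else 0) = _
    rw [hu, strictChain_cons lt htr, hl, Fin.cons_zero]
    simp only [true_and, and_assoc]
  · intro z _ hz
    refine Finset.sum_eq_zero fun f _ => ?_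
    simp [Fin.consEquiv_apply, hz]
  · simp

theorem chainSum_eq_zero [Fintype T] (hirr : ∀ x, ¬ lt x x) (n : ℕ)
    (hn : Fintype.card T ≤ n) (x : T) : chainSum lt rk t n x = 0 := by
  classical
  unfold chainSum
  refine Finset.sum_eq_zero fun f _ => if_neg ?_
  rintro ⟨h, -⟩
  have hinj : Function.Injective f := by
    intro i j hij
    rcases lt_trichotomy i j with h1 | h1 | h1
    · have := h i j h1
      rw [hij] at this
      exact absurd this (hirr _)
    · exact h1
    · have := h j i h1
      rw [hij] at this
      exact absurd this (hirr _)
  have := Fintype.card_le_of_injective f hinj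
  simp at this
  omega

theorem chainSum_top [Fintype T] (hirr : ∀ x, ¬ lt x x) (n : ℕ) :
    chainSum lt rk t (n + 1) t = 0 := by
  classical
  unfold chainSum
  refine Finset.sum_eq_zero fun f _ => if_neg ?_
  rintro ⟨h, h0, h1⟩
  have := h 0 (Fin.last (n + 1)) (Fin.last_pos)
  rw [h0, h1] at this
  exact hirr _ this

theorem PsiRel_eq_sum [Fintype T] (hirr : ∀ x, ¬ lt x x) (K : ℕ)
    (hK : Fintype.card T ≤ K) (x : T) :
    PsiRel ℤ lt rk x t = ∑ n ∈ Finset.range K, chainSum lt rk t n x := by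
  classical
  have h1 : ∀ n : ℕ, (∑ᶠ (f : Fin (n + 1) → T)
    (_ : IsStrictChain lt f ∧ f 0 = x ∧ f (Fin.last n) = t), chainWt ℤ rk f)
      = chainSum lt rk t n x := by
    intro n
    rw [finsum_eq_sum_of_fintype]
    unfold chainSum
    refine Finset.sum_congr rfl fun f _ => ?_
    rw [finsum_eq_if]
  unfold PsiRel
  simp only [h1]
  apply finsum_eq_sum_of_support_subset
  intro n hn
  simp only [Function.mem_support] at hn
  simp only [Finset.coe_range, Set.mem_Iio]
  by_contra hc
  exact hn (chainSum_eq_zero lt rk t hirr n (by omega) x)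

theorem PsiRel_rec [Fintype T] [DecidableEq T] [DecidableRel lt]
    (htr : ∀ x y z, lt x y → lt y z → lt x z)
    (hirr : ∀ x, ¬ lt x x) (x : T) (hx : lt x t) :
    PsiRel ℤ lt rk x t = ev ℤ ^ (rk t - rk x - 1) +
      ∑ z, if lt x z ∧ z ≠ t then
        ev ℤ ^ (rk z - rk x - 1) * bv ℤ * PsiRel ℤ lt rk z t else 0 := by
  have hxt : x ≠ t := by
    rintro rfl
    exact hirr _ hx
  rw [PsiRel_eq_sum lt rk t hirr (Fintype.card T + 1 + 1) (by omega) x,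
    Finset.sum_range_succ', Finset.sum_range_succ', chainSum_zero, if_neg hxt, add_zero, add_comm]
  congr 1
  · rw [chainSum_succ_aux lt rk t htr 0 x (fun z => ev ℤ ^ (rk z - rk x - 1))]
    · simp only [chainSum_zero]
      rw [Finset.sum_eq_single t]
      · simp [hx]
      · intro z _ hz
        simp [hz]
      · simp
    · intro f
      rw [chainWt_cons_zero]
      simp [chainWt]
  · have h2 : ∀ n, chainSum lt rk t (n + 1 + 1) x = ∑ z, if lt x z then
        ev ℤ ^ (rk z - rk x - 1) * bv ℤ * chainSum lt rk t (n + 1) z else 0 := by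
      intro n
      exact chainSum_succ_aux lt rk t htr (n + 1) x
        (fun z => ev ℤ ^ (rk z - rk x - 1) * bv ℤ) (fun f => chainWt_cons_succ rk x f)
    simp only [h2]
    rw [Finset.sum_comm]
    refine Finset.sum_congr rfl fun z _ => ?_
    by_cases hz : z = t
    · subst hz
      simp [chainSum_top _ _ _ hirr]
    · by_cases hxz : lt x z
      · simp only [hxz, hz, ne_eq, not_false_eq_true, and_self, if_true]
        rw [PsiRel_eq_sum lt rk t hirr (Fintype.card T + 1) (by omega) z,
          Finset.sum_range_succ', chainSum_zero, if_neg hz, add_zero, Finset.mul_sum]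
      · simp [hxz]

end Recursion

/-! ### The algebraic core -/

section Core

variable {α : Type} [Fintype α] [PartialOrder α] [BoundedOrder α] (rk : α → ℕ)

theorem rk_strictMono {rk : α → ℕ} (hrk : IsRankFun α rk) {x y : α} (h : x < y) :
    rk x < rk y := by
  classical
  let _ : LocallyFiniteOrder α := Fintype.toLocallyFiniteOrder
  have h' := transGen_covBy_of_lt h
  clear h
  induction h' with
  | single hc => rw [hrk.2 _ _ hc]; omega
  | tail hab hc ih =>
    have h1 := ih
    rw [hrk.2 _ _ hc]; omega

open Classical in
/-- Half the number of elements of the interval `[y,w]`, for `y < w`. -/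
def halfCard (y w : α) : ℤ :=
  if y < w then ((Finset.univ.filter fun z : α => y ≤ z ∧ z ≤ w ∧ Even (rk z)).card : ℤ) else 0

open Classical in
/-- The number of elements of the interval `[y,w]`. -/
def intCard (y w : α) : ℕ := (Finset.univ.filter fun z : α => y ≤ z ∧ z ≤ w).card

open Classical in
theorem euler_card {rk : α → ℕ} (heu : IsEulerian α rk) {y w : α} (h : y < w) :
    (Finset.univ.filter fun z : α => (y ≤ z ∧ z ≤ w) ∧ Even (rk z)).card =
      (Finset.univ.filter fun z : α => (y ≤ z ∧ z ≤ w) ∧ ¬ Even (rk z)).card := by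
  have := heu y w h
  rw [Set.ncard_eq_toFinset_card', Set.ncard_eq_toFinset_card'] at this
  simp only [Set.toFinset_setOf, ← and_assoc] at this
  convert this

theorem intCard_eq {rk : α → ℕ} (heu : IsEulerian α rk) {y w : α} (h : y < w) :
    (intCard y w : ℤ) = 2 * halfCard rk y w := by
  classical
  unfold intCard halfCard
  rw [if_pos h]
  have h1 := Finset.card_filter_add_card_filter_not (s := Finset.univ.filter fun z : α => y ≤ z ∧ z ≤ w)
    (fun z => Even (rk z))
  rw [Finset.filter_filter, Finset.filter_filter] at h1
  have h2 := euler_card heu h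
  simp only [← and_assoc]
  have e1 : (Finset.univ.filter fun z : α => (y ≤ z ∧ z ≤ w) ∧ Even (rk z)).card +
    (Finset.univ.filter fun z : α => (y ≤ z ∧ z ≤ w) ∧ Even (rk z)).card = 
      (Finset.univ.filter fun z : α => y ≤ z ∧ z ≤ w).card := by
    rw [← h1]
    congr 1
  rw [← e1]
  push_cast
  ring

open Classical in
/-- The zeta matrix. -/
def zetaM (α : Type) [PartialOrder α] : Matrix α α ℤ :=
  Matrix.of fun x y : α => if x ≤ y then 1 else 0

open Classical in
/-- The sign matrix. -/
def signM : Matrix α α ℤ := Matrix.diagonal fun x => (-1) ^ rk x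

/-- The matrix of half interval cardinalities. -/
def halfM : Matrix α α ℤ := Matrix.of fun x y => halfCard rk x y

theorem zeta_sign_zeta {rk : α → ℕ} (heu : IsEulerian α rk) :
    zetaM α * signM rk * zetaM α = signM rk := by
  classical
  ext x y
  rw [Matrix.mul_apply]
  simp only [signM, Matrix.mul_diagonal, zetaM, Matrix.of_apply]
  have h1 : ∀ z, ((if x ≤ z then (1 : ℤ) else 0) * (-1) ^ rk z * if z ≤ y then 1 else 0) =
      if x ≤ z ∧ z ≤ y then (-1) ^ rk z else 0 := by
    intro z
    by_cases h : x ≤ z <;> by_cases h' : z ≤ y <;> simp [h, h']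
  simp only [h1]
  rcases eq_or_ne x y with rfl | hne
  · rw [Matrix.diagonal_apply_eq, Finset.sum_eq_single x]
    · simp
    · intro z _ hz
      rw [if_neg]
      rintro ⟨h2, h3⟩
      exact hz (le_antisymm h3 h2)
    · simp
  · rw [Matrix.diagonal_apply_ne _ hne]
    by_cases hxy : x ≤ y
    · have h2 := euler_card heu (lt_of_le_of_ne hxy hne)
      rw [← Finset.sum_filter,
        ← Finset.sum_filter_add_sum_filter_not _ (fun z => Even (rk z)),
        Finset.filter_filter, Finset.filter_filter]
      have h3 : ∀ z ∈ Finset.univ.filter (fun z : α => (x ≤ z ∧ z ≤ y) ∧ Even (rk z)),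
          (-1 : ℤ) ^ rk z = 1 := by
        intro z hz
        exact (Finset.mem_filter.1 hz).2.2.neg_one_pow
      have h4 : ∀ z ∈ Finset.univ.filter (fun z : α => (x ≤ z ∧ z ≤ y) ∧ ¬ Even (rk z)),
          (-1 : ℤ) ^ rk z = -1 := by
        intro z hz
        exact (Nat.not_even_iff_odd.1 (Finset.mem_filter.1 hz).2.2).neg_one_pow
      rw [Finset.sum_congr rfl h3, Finset.sum_congr rfl h4, Finset.sum_const, Finset.sum_const]
      rw [show (Finset.univ.filter fun z : α => (x ≤ z ∧ z ≤ y) ∧ Even (rk z)).card =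
        (Finset.univ.filter fun z : α => (x ≤ z ∧ z ≤ y) ∧ ¬ Even (rk z)).card by convert h2]
      simp
    · refine Finset.sum_eq_zero fun z _ => if_neg ?_
      rintro ⟨h2, h3⟩
      exact hxy (h2.trans h3)

theorem zeta_sq [DecidableEq α] {rk : α → ℕ} (heu : IsEulerian α rk) :
    zetaM α * zetaM α = 1 + (2 : ℤ) • halfM rk := by
  classical
  ext x y
  have h0 : (zetaM α * zetaM α) x y = intCard x y := by
    rw [Matrix.mul_apply]
    simp only [zetaM, Matrix.of_apply, intCard, Finset.card_filter]
    push_cast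
    refine Finset.sum_congr rfl fun z _ => ?_
    by_cases h : x ≤ z <;> by_cases h' : z ≤ y <;> simp [h, h']
  rw [h0, Matrix.add_apply, Matrix.smul_apply]
  rcases eq_or_ne x y with rfl | hne
  · have h1 : (Finset.univ.filter fun z : α => x ≤ z ∧ z ≤ x) = {x} := by
      ext z
      simp only [Finset.mem_filter, Finset.mem_univ, true_and, Finset.mem_singleton]
      exact ⟨fun h => le_antisymm h.2 h.1, fun h => by simp [h]⟩
    simp [intCard, h1, halfM, halfCard]
  · rw [Matrix.one_apply_ne hne]
    by_cases hxy : x < y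
    · rw [intCard_eq heu hxy]
      simp [halfM]
    · have h1 : (Finset.univ.filter fun z : α => x ≤ z ∧ z ≤ y) = ∅ := by
        ext z
        simp only [Finset.mem_filter, Finset.mem_univ, true_and, Finset.notMem_empty, iff_false]
        rintro ⟨h2, h3⟩
        exact hxy (lt_of_le_of_ne (h2.trans h3) hne)
      simp [intCard, h1, halfM, halfCard, hxy]

theorem half_identity {rk : α → ℕ} (heu : IsEulerian α rk) (y u : α) :
    halfCard rk y u * ((-1) ^ rk u + (-1) ^ rk y) +
      2 * ∑ w, halfCard rk y w * (-1) ^ rk w * halfCard rk w u = 0 := by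
  classical
  have h1 := zeta_sign_zeta heu
  have h2 := zeta_sq heu
  have h3 : (1 + (2 : ℤ) • halfM rk) * signM rk * (1 + (2 : ℤ) • halfM rk) = signM rk := by
    rw [← h2]
    calc zetaM α * zetaM α * signM rk * (zetaM α * zetaM α)
        = zetaM α * (zetaM α * signM rk * zetaM α) * zetaM α := by
          simp only [Matrix.mul_assoc]
      _ = signM rk := by rw [h1, h1]
  have h4 : (2 : ℤ) • (halfM rk * signM rk + signM rk * halfM rk +
      (2 : ℤ) • (halfM rk * signM rk * halfM rk)) = 0 := by
    have h5 : (1 + (2 : ℤ) • halfM rk) * signM rk * (1 + (2 : ℤ) • halfM rk) - signM rk = 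
      (2 : ℤ) • (halfM rk * signM rk + signM rk * halfM rk +
      (2 : ℤ) • (halfM rk * signM rk * halfM rk)) := by
      simp only [add_mul, mul_add, one_mul, mul_one, smul_mul_assoc, mul_smul_comm, smul_add]
      abel
    rw [← h5, h3, sub_self]
  have h5 := congrFun (congrFun h4 y) u
  rw [Matrix.smul_apply, Matrix.add_apply, Matrix.add_apply, Matrix.smul_apply,
    Matrix.mul_apply (M := halfM rk * signM rk)] at h5
  simp only [signM, Matrix.mul_diagonal, Matrix.diagonal_mul, halfM, Matrix.of_apply,
    Matrix.zero_apply, smul_eq_mul] at h5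
  linarith

theorem half_top {rk : α → ℕ} (heu : IsEulerian α rk) (y : α) :
    (-1) ^ rk y + 2 * ∑ w, halfCard rk y w * (-1) ^ rk w = (-1) ^ rk (⊤ : α) := by
  classical
  have h1 : zetaM α * zetaM α * signM rk * zetaM α = zetaM α * signM rk := by
    rw [Matrix.mul_assoc (zetaM α), Matrix.mul_assoc (zetaM α), zeta_sign_zeta heu]
  rw [zeta_sq heu] at h1
  have h2 := congrFun (congrFun h1 y) ⊤
  rw [Matrix.mul_apply] at h2
  simp only [signM, Matrix.mul_diagonal, halfM, zetaM, Matrix.of_apply, le_top, if_true, mul_one,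
    Matrix.add_apply, Matrix.smul_apply, add_mul, one_mul, Finset.sum_add_distrib,
    Matrix.one_apply, ite_mul, zero_mul, Finset.sum_ite_eq, Finset.mem_univ, smul_eq_mul,
    mul_assoc, ← Finset.mul_sum] at h2
  exact h2

theorem half_even {rk : α → ℕ} (heu : IsEulerian α rk) (y u : α) (h : Even (rk y + rk u)) :
    ∑ w, (-1) ^ (rk y + rk w) * (halfCard rk y w * halfCard rk w u) = - halfCard rk y u := by
  have h1 := half_identity heu y u
  have h2 : (-1 : ℤ) ^ rk u = (-1) ^ rk y := by
    rcases Nat.even_or_odd (rk y) with h3 | h3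
    · rw [h3.neg_one_pow, (by grind : Even (rk u)).neg_one_pow]
    · rw [h3.neg_one_pow, (by grind : Odd (rk u)).neg_one_pow]
  rw [h2] at h1
  have h3 : ∑ w, (-1) ^ (rk y + rk w) * (halfCard rk y w * halfCard rk w u) =
      (-1) ^ rk y * ∑ w, halfCard rk y w * (-1) ^ rk w * halfCard rk w u := by
    rw [Finset.mul_sum]
    refine Finset.sum_congr rfl fun w _ => ?_
    ring
  rw [h3]
  rcases neg_one_pow_eq_or ℤ (rk y) with h4 | h4 <;> rw [h4] at h1 ⊢ <;> linarith

theorem half_odd {rk : α → ℕ} (heu : IsEulerian α rk) (y u : α) (h : Odd (rk y + rk u)) :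
    ∑ w, (-1) ^ (rk y + rk w) * (halfCard rk y w * halfCard rk w u) = 0 := by
  have h1 := half_identity heu y u
  have h2 : (-1 : ℤ) ^ rk u = - (-1) ^ rk y := by
    rcases Nat.even_or_odd (rk y) with h3 | h3
    · rw [h3.neg_one_pow, (by grind : Odd (rk u)).neg_one_pow]
    · rw [h3.neg_one_pow, (by grind : Even (rk u)).neg_one_pow]; simp
  rw [h2] at h1
  have h3 : ∑ w, (-1) ^ (rk y + rk w) * (halfCard rk y w * halfCard rk w u) =
      (-1) ^ rk y * ∑ w, halfCard rk y w * (-1) ^ rk w * halfCard rk w u := by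
    rw [Finset.mul_sum]
    refine Finset.sum_congr rfl fun w _ => ?_
    ring
  rw [h3]
  rcases neg_one_pow_eq_or ℤ (rk y) with h4 | h4 <;> rw [h4] at h1 ⊢ <;> linarith

theorem half_top_odd {rk : α → ℕ} (heu : IsEulerian α rk) (y : α)
    (h : Odd (rk y + rk (⊤ : α))) :
    ∑ w, (-1) ^ (rk y + rk w) * halfCard rk y w = -1 := by
  have h1 := half_top heu y
  have h2 : (-1 : ℤ) ^ rk (⊤ : α) = - (-1) ^ rk y := by
    rcases Nat.even_or_odd (rk y) with h3 | h3
    · rw [h3.neg_one_pow, (by grind : Odd (rk (⊤ : α))).neg_one_pow]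
    · rw [h3.neg_one_pow, (by grind : Even (rk (⊤ : α))).neg_one_pow]; simp
  rw [h2] at h1
  have h3 : ∑ w, (-1) ^ (rk y + rk w) * halfCard rk y w =
      (-1) ^ rk y * ∑ w, halfCard rk y w * (-1) ^ rk w := by
    rw [Finset.mul_sum]
    refine Finset.sum_congr rfl fun w _ => ?_
    ring
  rw [h3]
  rcases neg_one_pow_eq_or ℤ (rk y) with h4 | h4 <;> rw [h4] at h1 ⊢ <;> linarith

theorem half_ne_zero {rk : α → ℕ} {y w : α} (h : halfCard rk y w ≠ 0) : y < w := by
  classical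
  by_contra hc
  exact h (by simp [halfCard, hc])

end Core

section Core2

variable {α : Type} [Fintype α] [PartialOrder α] [BoundedOrder α] (rk : α → ℕ)
  {A : Type} [Ring A] (e : A)

/-- The odd part of the weighted half cardinalities. -/
def Qm : Matrix α α A := Matrix.of fun y w =>
  if Odd (rk y + rk w) then halfCard rk y w • e ^ (rk w - rk y - 1) else 0

/-- The even part of the weighted half cardinalities. -/
def Sm : Matrix α α A := Matrix.of fun y w =>
  if Even (rk y + rk w) then halfCard rk y w • e ^ (rk w - rk y - 2) else 0

/-- Odd part of the right hand side. -/
def Vo : α → A := fun y =>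
  if Odd (rk y + rk (⊤ : α)) then e ^ (rk (⊤ : α) - rk y - 1) else 0

/-- Even part of the right hand side. -/
def Ve : α → A := fun y =>
  if Even (rk y + rk (⊤ : α)) then e ^ (rk (⊤ : α) - rk y) else 0

theorem QQ_eq {rk : α → ℕ} (hrk : IsRankFun α rk) (heu : IsEulerian α rk) (y u : α) :
    (Qm rk e * Qm rk e) y u = Sm rk e y u + e * e * (Sm rk e * Sm rk e) y u := by
  rw [Matrix.mul_apply, Matrix.mul_apply, Finset.mul_sum, ← sub_eq_iff_eq_add,
    ← Finset.sum_sub_distrib]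
  by_cases hp : Even (rk y + rk u)
  · have h1 : ∀ w, Qm rk e y w * Qm rk e w u - e * e * (Sm rk e y w * Sm rk e w u) =
        (-((-1) ^ (rk y + rk w) * (halfCard rk y w * halfCard rk w u))) •
          e ^ (rk u - rk y - 2) := by
      intro w
      by_cases h2 : halfCard rk y w = 0
      · simp [Qm, Sm, h2]
      by_cases h3 : halfCard rk w u = 0
      · simp [Qm, Sm, h3]
      have h4 := rk_strictMono hrk (half_ne_zero h2)
      have h5 := rk_strictMono hrk (half_ne_zero h3)
      rcases Nat.even_or_odd (rk y + rk w) with h6 | h6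
      · have h7 : Even (rk w + rk u) := by grind
        have h8 : ¬ Odd (rk y + rk w) := by grind
        obtain ⟨i, hi⟩ : ∃ i, rk w = rk y + i + 2 := ⟨rk w - rk y - 2, by grind⟩
        obtain ⟨j, hj⟩ : ∃ j, rk u = rk w + j + 2 := ⟨rk u - rk w - 2, by grind⟩
        simp only [Qm, Sm, Matrix.of_apply, if_pos h6, if_pos h7, if_neg h8, zero_mul, zero_sub,
          h6.neg_one_pow, one_mul, smul_mul_assoc, mul_smul_comm, smul_smul, neg_smul]
        rw [show rk w - rk y - 2 = i by omega, show rk u - rk w - 2 = j by omega,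
          show rk u - rk y - 2 = 1 + 1 + (i + j) by omega, pow_add, pow_add, pow_add, pow_one,
          mul_comm (halfCard rk w u)]
      · have h7 : Odd (rk w + rk u) := by grind
        have h8 : ¬ Even (rk y + rk w) := by grind
        obtain ⟨i, hi⟩ : ∃ i, rk w = rk y + i + 1 := ⟨rk w - rk y - 1, by omega⟩
        obtain ⟨j, hj⟩ : ∃ j, rk u = rk w + j + 1 := ⟨rk u - rk w - 1, by omega⟩
        simp only [Qm, Sm, Matrix.of_apply, if_pos h6, if_pos h7, if_neg h8, zero_mul, mul_zero,
          sub_zero, h6.neg_one_pow, neg_mul, neg_neg, one_mul, smul_mul_assoc, mul_smul_comm,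
          smul_smul]
        rw [show rk w - rk y - 1 = i by omega, show rk u - rk w - 1 = j by omega,
          show rk u - rk y - 2 = i + j by omega, pow_add,
          mul_comm (halfCard rk w u)]
    rw [Finset.sum_congr rfl fun w _ => h1 w, ← Finset.sum_smul, Finset.sum_neg_distrib,
      half_even heu y u hp, neg_neg]
    simp [Sm, hp]
  · have h1 : ∀ w, Qm rk e y w * Qm rk e w u - e * e * (Sm rk e y w * Sm rk e w u) = 0 := by
      intro w
      rcases Nat.even_or_odd (rk y + rk w) with h6 | h6
      · have h7 : ¬ Even (rk w + rk u) := by grind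
        have h8 : ¬ Odd (rk y + rk w) := by grind
        simp [Qm, Sm, h7, h8]
      · have h7 : ¬ Odd (rk w + rk u) := by grind
        have h8 : ¬ Even (rk y + rk w) := by grind
        simp [Qm, Sm, h7, h8]
    rw [Finset.sum_congr rfl fun w _ => h1 w]
    simp [Sm, hp]

theorem QS_eq {rk : α → ℕ} (hrk : IsRankFun α rk) (heu : IsEulerian α rk) :
    Qm rk e * Sm rk e = Sm rk e * Qm rk e := by
  ext y u
  rw [Matrix.mul_apply, Matrix.mul_apply, ← sub_eq_zero, ← Finset.sum_sub_distrib]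
  by_cases hp : Odd (rk y + rk u)
  · have h1 : ∀ w, Qm rk e y w * Sm rk e w u - Sm rk e y w * Qm rk e w u =
        (-((-1) ^ (rk y + rk w) * (halfCard rk y w * halfCard rk w u))) •
          e ^ (rk u - rk y - 3) := by
      intro w
      by_cases h2 : halfCard rk y w = 0
      · simp [Qm, Sm, h2]
      by_cases h3 : halfCard rk w u = 0
      · simp [Qm, Sm, h3]
      have h4 := rk_strictMono hrk (half_ne_zero h2)
      have h5 := rk_strictMono hrk (half_ne_zero h3)
      rcases Nat.even_or_odd (rk y + rk w) with h6 | h6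
      · have h7 : Odd (rk w + rk u) := by grind
        have h8 : ¬ Odd (rk y + rk w) := by grind
        obtain ⟨i, hi⟩ : ∃ i, rk w = rk y + i + 2 := ⟨rk w - rk y - 2, by grind⟩
        obtain ⟨j, hj⟩ : ∃ j, rk u = rk w + j + 1 := ⟨rk u - rk w - 1, by omega⟩
        simp only [Qm, Sm, Matrix.of_apply, if_pos h6, if_pos h7, if_neg h8, zero_mul, zero_sub,
          h6.neg_one_pow, one_mul, smul_mul_assoc, mul_smul_comm, smul_smul, neg_smul]
        rw [show rk w - rk y - 2 = i by omega, show rk u - rk w - 1 = j by omega,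
          show rk u - rk y - 3 = i + j by omega, pow_add,
          mul_comm (halfCard rk w u)]
      · have h7 : Even (rk w + rk u) := by grind
        have h8 : ¬ Even (rk y + rk w) := by grind
        obtain ⟨i, hi⟩ : ∃ i, rk w = rk y + i + 1 := ⟨rk w - rk y - 1, by omega⟩
        obtain ⟨j, hj⟩ : ∃ j, rk u = rk w + j + 2 := ⟨rk u - rk w - 2, by grind⟩
        simp only [Qm, Sm, Matrix.of_apply, if_pos h6, if_pos h7, if_neg h8, zero_mul,
          sub_zero, h6.neg_one_pow, neg_mul, neg_neg, one_mul, smul_mul_assoc, mul_smul_comm,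
          smul_smul]
        rw [show rk w - rk y - 1 = i by omega, show rk u - rk w - 2 = j by omega,
          show rk u - rk y - 3 = i + j by omega, pow_add,
          mul_comm (halfCard rk w u)]
    rw [Finset.sum_congr rfl fun w _ => h1 w, ← Finset.sum_smul, Finset.sum_neg_distrib,
      half_odd heu y u hp, neg_zero, zero_smul]
  · refine Finset.sum_eq_zero fun w _ => ?_
    rcases Nat.even_or_odd (rk y + rk w) with h6 | h6
    · have h7 : ¬ Odd (rk w + rk u) := by grind
      have h8 : ¬ Odd (rk y + rk w) := by grind
      simp [Qm, Sm, h7, h8]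
    · have h7 : ¬ Even (rk w + rk u) := by grind
      have h8 : ¬ Even (rk y + rk w) := by grind
      simp [Qm, Sm, h7, h8]

theorem QV_eq {rk : α → ℕ} (hrk : IsRankFun α rk) (heu : IsEulerian α rk) (y : α) :
    (Qm rk e).mulVec (Ve rk e) y = Vo rk e y + e * e * (Sm rk e).mulVec (Vo rk e) y := by
  simp only [Matrix.mulVec, dotProduct]
  rw [Finset.mul_sum, ← sub_eq_iff_eq_add, ← Finset.sum_sub_distrib]
  by_cases hp : Odd (rk y + rk (⊤ : α))
  · have h1 : ∀ w, Qm rk e y w * Ve rk e w - e * e * (Sm rk e y w * Vo rk e w) =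
        (-((-1) ^ (rk y + rk w) * halfCard rk y w)) •
          e ^ (rk (⊤ : α) - rk y - 1) := by
      intro w
      by_cases h2 : halfCard rk y w = 0
      · simp [Qm, Sm, h2]
      have h4 := rk_strictMono hrk (half_ne_zero h2)
      have h5 : rk w ≤ rk (⊤ : α) := by
        rcases eq_or_lt_of_le (le_top : w ≤ ⊤) with h | h
        · rw [h]
        · exact (rk_strictMono hrk h).le
      rcases Nat.even_or_odd (rk y + rk w) with h6 | h6
      · have h7 : Odd (rk w + rk (⊤ : α)) := by grind
        have h8 : ¬ Odd (rk y + rk w) := by grind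
        obtain ⟨i, hi⟩ : ∃ i, rk w = rk y + i + 2 := ⟨rk w - rk y - 2, by grind⟩
        obtain ⟨j, hj⟩ : ∃ j, rk (⊤ : α) = rk w + j + 1 := ⟨rk (⊤ : α) - rk w - 1, by grind⟩
        simp only [Qm, Sm, Ve, Vo, Matrix.of_apply, if_pos h6, if_pos h7, if_neg h8, zero_mul,
          zero_sub, h6.neg_one_pow, one_mul, smul_mul_assoc, mul_smul_comm, neg_smul]
        rw [show rk w - rk y - 2 = i by omega, show rk (⊤ : α) - rk w - 1 = j by omega,
          show rk (⊤ : α) - rk y - 1 = 1 + 1 + (i + j) by omega, pow_add, pow_add, pow_add,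
          pow_one]
      · have h7 : Even (rk w + rk (⊤ : α)) := by grind
        have h8 : ¬ Even (rk y + rk w) := by grind
        obtain ⟨i, hi⟩ : ∃ i, rk w = rk y + i + 1 := ⟨rk w - rk y - 1, by omega⟩
        obtain ⟨j, hj⟩ : ∃ j, rk (⊤ : α) = rk w + j := ⟨rk (⊤ : α) - rk w, by omega⟩
        simp only [Qm, Sm, Ve, Vo, Matrix.of_apply, if_pos h6, if_pos h7, if_neg h8, zero_mul,
          mul_zero, sub_zero, h6.neg_one_pow, neg_mul, neg_neg, one_mul, smul_mul_assoc,
          mul_smul_comm]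
        rw [show rk w - rk y - 1 = i by omega, show rk (⊤ : α) - rk w = j by omega,
          show rk (⊤ : α) - rk y - 1 = i + j by omega, pow_add]
    rw [Finset.sum_congr rfl fun w _ => h1 w, ← Finset.sum_smul, Finset.sum_neg_distrib,
      half_top_odd heu y hp, neg_neg]
    simp [Vo, hp]
  · rw [Finset.sum_eq_zero]
    · simp [Vo, hp]
    · intro w _
      rcases Nat.even_or_odd (rk y + rk w) with h6 | h6
      · have h7 : ¬ Odd (rk w + rk (⊤ : α)) := by grind
        have h8 : ¬ Odd (rk y + rk w) := by grind
        simp [Qm, Vo, h7, h8]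
      · have h7 : ¬ Even (rk w + rk (⊤ : α)) := by grind
        have h8 : ¬ Even (rk y + rk w) := by grind
        simp [Ve, Sm, h7, h8]

theorem mulVec_comm_smul (M : Matrix α α A) (hM : ∀ i j, Commute (M i j) e) (f : α → A) :
    M.mulVec (e • f) = e • M.mulVec f := by
  ext y
  simp only [Matrix.mulVec, dotProduct, Pi.smul_apply, smul_eq_mul, Finset.mul_sum]
  refine Finset.sum_congr rfl fun w _ => ?_
  rw [← mul_assoc, (hM y w).eq, mul_assoc]

theorem Qm_comm (i j : α) : Commute (Qm rk e i j) e := by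
  simp only [Qm, Matrix.of_apply]
  split_ifs
  · exact ((Commute.refl e).pow_left _).smul_left _
  · exact Commute.zero_left _

theorem Sm_comm (i j : α) : Commute (Sm rk e i j) e := by
  simp only [Sm, Matrix.of_apply]
  split_ifs
  · exact ((Commute.refl e).pow_left _).smul_left _
  · exact Commute.zero_left _

theorem pow_even_mem (R : Subring A) (he : e * e ∈ R) {n : ℕ} (hn : Even n) : e ^ n ∈ R := by
  obtain ⟨k, rfl⟩ := hn
  rw [← two_mul, pow_mul, pow_two]
  exact R.pow_mem he k

theorem core_mem {rk : α → ℕ} (hrk : IsRankFun α rk) (heu : IsEulerian α rk)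
    (b : A) (R : Subring A) (he : e * e ∈ R) (hc : e + 2 * b ∈ R) (g : α → A)
    [DecidableRel ((· < ·) : α → α → Prop)]
    (hg : ∀ y, g y = e ^ (rk (⊤ : α) - rk y) + ∑ w, if y < w then
      intCard y w • (e ^ (rk w - rk y - 1) * b * g w) else 0) (y : α) : g y ∈ R := by
  set c : A := e + 2 * b with hcdef
  have hb : 2 * b = c - e := by rw [hcdef]; abel
  -- the recursion in matrix form
  have hG : g = Ve rk e + e • Vo rk e + (Qm rk e).mulVec (c • g) - e • (Qm rk e).mulVec g
      + e • (Sm rk e).mulVec (c • g) - e • e • (Sm rk e).mulVec g := by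
    ext y
    rw [hg y]
    have h1 : e ^ (rk (⊤ : α) - rk y) = Ve rk e y + e * Vo rk e y := by
      rcases Nat.even_or_odd (rk y + rk (⊤ : α)) with h | h
      · have h' : ¬ Odd (rk y + rk (⊤ : α)) := by grind
        simp [Ve, Vo, h, h']
      · have h' : ¬ Even (rk y + rk (⊤ : α)) := by grind
        have h5 : rk y ≤ rk (⊤ : α) := by
          rcases eq_or_lt_of_le (le_top : y ≤ ⊤) with h | h
          · rw [h]
          · exact (rk_strictMono hrk h).le
        obtain ⟨j, hj⟩ : ∃ j, rk (⊤ : α) = rk y + j + 1 := ⟨rk (⊤ : α) - rk y - 1, by grind⟩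
        simp only [Ve, Vo, if_pos h, if_neg h', zero_add]
        rw [show rk (⊤ : α) - rk y - 1 = j by omega,
          show rk (⊤ : α) - rk y = j + 1 by omega, pow_succ']
    have h2 : ∀ w, (if y < w then intCard y w • (e ^ (rk w - rk y - 1) * b * g w) else 0) =
        Qm rk e y w * (c * g w) - e * (Qm rk e y w * g w) + e * (Sm rk e y w * (c * g w)) -
          e * (e * (Sm rk e y w * g w)) := by
      intro w
      by_cases hyw : y < w
      · rw [if_pos hyw]
        have h3 : intCard y w • (e ^ (rk w - rk y - 1) * b * g w) =
            halfCard rk y w • (e ^ (rk w - rk y - 1) * (c * g w - e * g w)) := by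
          rw [← sub_mul, ← hb, ← natCast_zsmul, intCard_eq heu hyw, mul_comm, mul_smul]
          congr 1
          rw [two_smul, two_mul, add_mul, mul_add, mul_assoc]
        rw [h3]
        have h4 := rk_strictMono hrk hyw
        rcases Nat.even_or_odd (rk y + rk w) with h | h
        · have h' : ¬ Odd (rk y + rk w) := by grind
          obtain ⟨j, hj⟩ : ∃ j, rk w = rk y + j + 2 := ⟨rk w - rk y - 2, by grind⟩
          simp only [Qm, Sm, Matrix.of_apply, if_pos h, if_neg h', zero_mul, mul_zero, sub_zero,
            zero_add]
          rw [show rk w - rk y - 1 = j + 1 by omega, show rk w - rk y - 2 = j by omega]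
          have hcm : e ^ j * (e * g w) = e * (e ^ j * g w) := by
            rw [← mul_assoc, ← mul_assoc, ← pow_succ, pow_succ']
          simp only [smul_mul_assoc, mul_smul_comm, mul_sub, smul_sub, pow_succ', mul_assoc, hcm]
        · have h' : ¬ Even (rk y + rk w) := by grind
          have hcm : ∀ j, e ^ j * (e * g w) = e * (e ^ j * g w) := by
            intro j
            rw [← mul_assoc, ← mul_assoc, ← pow_succ, pow_succ']
          simp only [Qm, Sm, Matrix.of_apply, if_pos h, if_neg h', zero_mul, mul_zero, sub_zero,
            add_zero, smul_mul_assoc, mul_smul_comm, mul_sub, smul_sub, hcm]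
      · have h0 : halfCard rk y w = 0 := by
          by_contra hh
          exact hyw (half_ne_zero hh)
        simp [Qm, Sm, h0, hyw]
    simp only [Pi.add_apply, Pi.sub_apply, Pi.smul_apply, smul_eq_mul, Matrix.mulVec, dotProduct]
    rw [h1, Finset.sum_congr rfl fun w _ => h2 w]
    simp only [Finset.sum_add_distrib, Finset.sum_sub_distrib, Finset.mul_sum]
    abel
  have hA : ∀ v : α → A, (Qm rk e).mulVec ((Qm rk e).mulVec v) =
      (Sm rk e).mulVec v + e • e • (Sm rk e).mulVec ((Sm rk e).mulVec v) := by
    intro v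
    rw [Matrix.mulVec_mulVec, Matrix.mulVec_mulVec]
    ext y
    simp only [Pi.add_apply, Pi.smul_apply, smul_eq_mul, Matrix.mulVec, dotProduct]
    rw [Finset.mul_sum, Finset.mul_sum, ← Finset.sum_add_distrib]
    refine Finset.sum_congr rfl fun w _ => ?_
    rw [QQ_eq e hrk heu, add_mul]
    simp only [mul_assoc]
  have hB : (Qm rk e).mulVec (Ve rk e) = Vo rk e + e • e • (Sm rk e).mulVec (Vo rk e) := by
    ext y
    rw [QV_eq e hrk heu y]
    simp [mul_assoc]
  have hC : ∀ v : α → A, (Qm rk e).mulVec ((Sm rk e).mulVec v) =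
      (Sm rk e).mulVec ((Qm rk e).mulVec v) := by
    intro v
    rw [Matrix.mulVec_mulVec, Matrix.mulVec_mulVec, QS_eq e hrk heu]
  obtain ⟨X, hX⟩ : ∃ X, X = Vo rk e - (Qm rk e).mulVec g + (Sm rk e).mulVec (c • g) := ⟨_, rfl⟩
  have h1 : g = Ve rk e + (Qm rk e).mulVec (c • g) - e • e • (Sm rk e).mulVec g + e • X := by
    rw [hX, smul_add, smul_sub]
    nth_rewrite 1 [hG]
    abel
  have h2 : (Qm rk e).mulVec g = (Qm rk e).mulVec (Ve rk e) +
      (Qm rk e).mulVec ((Qm rk e).mulVec (c • g)) -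
      e • e • (Qm rk e).mulVec ((Sm rk e).mulVec g) + e • (Qm rk e).mulVec X := by
    nth_rewrite 1 [h1]
    simp only [Matrix.mulVec_add, Matrix.mulVec_sub, mulVec_comm_smul e _ (Qm_comm rk e)]
  have h3 : (Sm rk e).mulVec X = (Sm rk e).mulVec (Vo rk e) -
      (Sm rk e).mulVec ((Qm rk e).mulVec g) + (Sm rk e).mulVec ((Sm rk e).mulVec (c • g)) := by
    rw [hX, Matrix.mulVec_add, Matrix.mulVec_sub]
  have h4 : X = -(e • e • (Sm rk e).mulVec X) - e • (Qm rk e).mulVec X := by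
    nth_rewrite 1 [hX]
    rw [h2, hA, hB, hC, h3]
    simp only [smul_add, smul_sub]
    abel
  have hX0 : ∀ y, X y = 0 := by
    intro y
    induction y using WellFoundedGT.induction with
    | ind y ih =>
      rw [h4]
      have k1 : ∀ M : Matrix α α A, (∀ w, ¬ y < w → M y w = 0) → M.mulVec X y = 0 := by
        intro M hM
        simp only [Matrix.mulVec, dotProduct]
        refine Finset.sum_eq_zero fun w _ => ?_
        by_cases hw : y < w
        · rw [ih w hw, mul_zero]
        · rw [hM w hw, zero_mul]
      have k0 : ∀ w, ¬ y < w → halfCard rk y w = 0 := by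
        intro w hw
        by_contra hh
        exact hw (half_ne_zero hh)
      have k2 := k1 (Qm rk e) (fun w hw => by simp [Qm, k0 w hw])
      have k3 := k1 (Sm rk e) (fun w hw => by simp [Sm, k0 w hw])
      simp [k2, k3]
  have hX1 : X = 0 := funext hX0
  rw [hX1, smul_zero, add_zero] at h1
  induction y using WellFoundedGT.induction with
  | ind y ih =>
    have h5 := congrFun h1 y
    rw [h5]
    simp only [Pi.add_apply, Pi.sub_apply, Pi.smul_apply, smul_eq_mul, Matrix.mulVec, dotProduct]
    have k0 : ∀ w, ¬ y < w → halfCard rk y w = 0 := by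
      intro w hw
      by_contra hh
      exact hw (half_ne_zero hh)
    refine R.sub_mem (R.add_mem ?_ (R.sum_mem fun w _ => ?_)) ?_
    · simp only [Ve]
      split_ifs with h
      · exact pow_even_mem e R he (by grind)
      · exact R.zero_mem
    · by_cases hw : y < w
      · refine R.mul_mem ?_ (R.mul_mem hc (ih w hw))
        have := rk_strictMono hrk hw
        simp only [Qm, Matrix.of_apply]
        split_ifs with h
        · exact R.zsmul_mem (pow_even_mem e R he (by grind)) _
        · exact R.zero_mem
      · simp [Qm, k0 w hw, R.zero_mem]
    · rw [← mul_assoc]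
      refine R.mul_mem he (R.sum_mem fun w _ => ?_)
      by_cases hw : y < w
      · refine R.mul_mem ?_ (ih w hw)
        simp only [Sm, Matrix.of_apply]
        split_ifs with h
        · exact R.zsmul_mem (pow_even_mem e R he (by grind)) _
        · exact R.zero_mem
      · simp [Sm, k0 w hw, R.zero_mem]

end Core2

/-! ### The order of the Tchebyshev transform -/

section TOrder

variable (α : Type) [PartialOrder α] [BoundedOrder α]

/-- Explicit description of the strict order of `T(P)`. -/
def TPexpl : Option (TPel α) → Option (TPel α) → Prop
  | some p, some q => p.1.2 < q.1.2 ∧ (q.1.1 = p.1.1 ∨ (p.1.2 : WithBot α) ≤ q.1.1)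
  | some _, none => True
  | none, _ => False

theorem TPexpl_trans (x y z : Option (TPel α)) (h1 : TPexpl α x y) (h2 : TPexpl α y z) :
    TPexpl α x z := by
  match x, y, z, h1, h2 with
  | some p, some q, some r, h1, h2 =>
    refine ⟨h1.1.trans h2.1, ?_⟩
    rcases h2.2 with h | h
    · rw [h]; exact h1.2
    · exact Or.inr ((WithBot.coe_le_coe.2 h1.1.le).trans h)
  | some p, some q, none, h1, h2 => trivial

theorem TPexpl_irrefl (x : Option (TPel α)) : ¬ TPexpl α x x := by
  match x with
  | some p => exact fun h => lt_irrefl _ h.1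
  | none => exact fun h => h

theorem TPexpl_of_TPlt (x y : TP α) (h : TPlt α x y) : TPexpl α x y := by
  have hc : ∀ x y, TPcov α x y → TPexpl α x y := by
    intro x y h
    cases h with
    | up h1 h2 hc => exact ⟨hc.lt, Or.inr le_rfl⟩
    | same h1 h2 hc => exact ⟨hc.lt, Or.inl rfl⟩
    | top h1 => trivial
  induction h with
  | single h => exact hc _ _ h
  | tail _ h ih => exact TPexpl_trans α _ _ _ ih (hc _ _ h)

theorem TPlt_same [Finite α] (x : WithBot α) (y w : α) (hy : x < y) (hw : x < w) (h : y < w) :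
    TPlt α (some ⟨(x, y), hy⟩) (some ⟨(x, w), hw⟩) := by
  classical
  have := Fintype.ofFinite α
  let _ : LocallyFiniteOrder α := Fintype.toLocallyFiniteOrder
  have h' := transGen_covBy_of_lt h
  clear h
  induction h' with
  | single hc => exact Relation.TransGen.single (TPcov.same hy hw hc)
  | tail hab hc ih =>
    rename_i b c
    have hlt : ∀ z, Relation.TransGen (· ⋖ ·) y z → y < z := by
      intro z hz
      induction hz with
      | single hc => exact hc.lt
      | tail _ hc ih => exact ih.trans hc.lt
    have hb : x < (b : WithBot α) := hy.trans (WithBot.coe_lt_coe.2 (hlt _ hab))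
    exact Relation.TransGen.tail (ih hb) (TPcov.same hb hw hc)

theorem TPlt_of_TPexpl [Finite α] (x y : TP α) (h : TPexpl α x y) : TPlt α x y := by
  classical
  have := Fintype.ofFinite α
  let _ : LocallyFiniteOrder α := Fintype.toLocallyFiniteOrder
  match x, y, h with
  | some ⟨(x, y), hx⟩, some ⟨(x', w), hx'⟩, h =>
    obtain ⟨h1, h2⟩ := h
    simp only at h1 h2 hx hx'
    rcases h2 with rfl | h2
    · exact TPlt_same α _ _ _ _ _ h1
    · induction x' using WithBot.recBotCoe with
      | bot => exact absurd h2 (by simp)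
      | coe z =>
        have hyz : y ≤ z := WithBot.coe_le_coe.1 h2
        have hzw : z < w := WithBot.coe_lt_coe.1 hx'
        obtain ⟨z1, hz1, hz1w⟩ := exists_covBy_le_of_lt hzw
        have hxz : x < (z : WithBot α) := hx.trans_le h2
        have hzz1 : (z : WithBot α) < (z1 : WithBot α) := WithBot.coe_lt_coe.2 hz1.lt
        have s1 : TPlt α (some ⟨(x, z), hxz⟩) (some ⟨((z : WithBot α), z1), hzz1⟩) :=
          Relation.TransGen.single (TPcov.up hxz hzz1 hz1)
        have s2 : TPlt α (some ⟨(x, y), hx⟩) (some ⟨((z : WithBot α), z1), hzz1⟩) := by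
          rcases eq_or_lt_of_le hyz with rfl | h
          · exact s1
          · exact Relation.TransGen.trans (TPlt_same α x y z hx hxz h) s1
        rcases eq_or_lt_of_le hz1w with rfl | h
        · exact s2
        · exact Relation.TransGen.trans s2 (TPlt_same α _ z1 w hzz1 hx' h)
  | some ⟨(x, y), hx⟩, none, _ =>
    simp only at hx
    have hxt : x < ((⊤ : α) : WithBot α) := hx.trans_le (WithBot.coe_le_coe.2 le_top)
    have s1 : TPlt α (some ⟨(x, (⊤ : α)), hxt⟩) none := Relation.TransGen.single (TPcov.top hxt)
    rcases eq_or_lt_of_le (le_top : y ≤ ⊤) with rfl | h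
    · exact s1
    · exact Relation.TransGen.trans (TPlt_same α x y ⊤ hx hxt h) s1

theorem TPlt_iff [Finite α] (x y : TP α) : TPlt α x y ↔ TPexpl α x y :=
  ⟨TPexpl_of_TPlt α x y, TPlt_of_TPexpl α x y⟩

theorem TPlt_some_iff [Finite α] (p q : TPel α) : TPlt α (some p) (some q) ↔
    p.1.2 < q.1.2 ∧ (q.1.1 = p.1.1 ∨ (p.1.2 : WithBot α) ≤ q.1.1) :=
  TPlt_iff α (some p) (some q)

open Classical in
instance instFintypeTPel [Fintype α] : Fintype (TPel α) :=
  inferInstanceAs (Fintype {p : WithBot α × α // p.1 < (p.2 : WithBot α)})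

instance instFintypeTP [Fintype α] : Fintype (TP α) :=
  inferInstanceAs (Fintype (Option (TPel α)))

open Classical in
theorem fiber_card [Fintype α] (p : TPel α) (w : α) (h : p.1.2 < w) :
    (Finset.univ.filter fun q : TPel α => TPlt α (some p) (some q) ∧ q.1.2 = w).card =
      intCard p.1.2 w := by
  symm
  have hpw : p.1.1 < (w : WithBot α) := p.2.trans (WithBot.coe_lt_coe.2 h)
  let i : α → TPel α := fun t =>
    if ht : t < w then ⟨((t : WithBot α), w), WithBot.coe_lt_coe.2 ht⟩ else ⟨(p.1.1, w), hpw⟩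
  have i1 : ∀ t (ht : t < w), i t = ⟨((t : WithBot α), w), WithBot.coe_lt_coe.2 ht⟩ :=
    fun t ht => dif_pos ht
  have i2 : ∀ t, ¬ t < w → i t = ⟨(p.1.1, w), hpw⟩ := fun t ht => dif_neg ht
  unfold intCard
  refine Finset.card_nbij i ?_ ?_ ?_
  · intro t ht
    simp only [Finset.coe_filter, Finset.mem_univ, true_and, Set.mem_setOf_eq, Finset.mem_filter] at ht ⊢
    rw [TPlt_some_iff]
    by_cases htw : t < w
    · rw [i1 t htw]
      exact ⟨⟨h, Or.inr (WithBot.coe_le_coe.2 ht.1)⟩, rfl⟩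
    · rw [i2 t htw]
      exact ⟨⟨h, Or.inl rfl⟩, rfl⟩
  · intro t ht t' ht' htt
    simp only [Finset.coe_filter, Finset.mem_univ, true_and, Set.mem_setOf_eq] at ht ht'
    have key : ∀ s s' : α, p.1.2 ≤ s → s < w → ¬ s' < w → i s ≠ i s' := by
      intro s s' hs hsw hs' he
      rw [i1 s hsw, i2 s' hs'] at he
      have h3 : (s : WithBot α) = p.1.1 := congrArg (fun q : TPel α => q.1.1) he
      have h4 := p.2
      rw [← h3] at h4
      exact absurd (WithBot.coe_lt_coe.1 h4) (not_lt_of_ge hs)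
    by_cases h1 : t < w <;> by_cases h2 : t' < w
    · rw [i1 t h1, i1 t' h2] at htt
      exact WithBot.coe_injective (congrArg (fun q : TPel α => q.1.1) htt)
    · exact absurd htt (key t t' ht.1 h1 h2)
    · exact absurd htt.symm (key t' t ht'.1 h2 h1)
    · rw [(eq_of_le_of_not_lt ht.2 h1), (eq_of_le_of_not_lt ht'.2 h2)]
  · rintro ⟨⟨x', w'⟩, hq⟩ hq'
    simp only [Finset.coe_filter, Finset.mem_univ, true_and, Set.mem_setOf_eq, TPlt_some_iff] at hq'
    obtain ⟨⟨-, h2⟩, rfl⟩ := hq'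
    rcases h2 with rfl | h2
    · refine ⟨w', ?_, i2 w' (lt_irrefl _)⟩
      simp [h.le]
    · induction x' using WithBot.recBotCoe with
      | bot => exact absurd h2 (by simp)
      | coe z =>
        have hzw : z < w' := WithBot.coe_lt_coe.1 hq
        refine ⟨z, ?_, i1 z hzw⟩
        simp [WithBot.coe_le_coe.1 h2, hzw.le]

open Classical in
theorem Psi_rec [Fintype α] (rk : α → ℕ) (p : TPel α) :
    PsiRel ℤ (TPlt α) (TPrk α rk) (some p) none = ev ℤ ^ (rk (⊤ : α) - rk p.1.2) +
      ∑ q : TPel α, if TPlt α (some p) (some q) then ev ℤ ^ (rk q.1.2 - rk p.1.2 - 1) * bv ℤ *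
        PsiRel ℤ (TPlt α) (TPrk α rk) (some q) none else 0 := by
  have h := PsiRel_rec (TPlt α) (TPrk α rk) (none : TP α)
    (fun x y z h1 h2 => Relation.TransGen.trans h1 h2)
    (fun x h => TPexpl_irrefl α x (TPexpl_of_TPlt α x x h)) (some p)
    ((TPlt_iff α (some p) none).2 trivial)
  rw [h]
  congr 1
  · congr 1
    simp only [TPrk]
    omega
  · refine (Fintype.sum_option (α := TPel α) _).trans ?_
    rw [if_neg (by rintro ⟨-, h⟩; exact h rfl), zero_add]
    refine Finset.sum_congr rfl fun q _ => ?_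
    have hq : (some q : TP α) ≠ (none : TP α) := Option.some_ne_none q
    by_cases hl : TPlt α (some p) (some q)
    · rw [if_pos ⟨hl, hq⟩, if_pos hl]
      rfl
    · rw [if_neg hl, if_neg (fun h => hl h.1)]

open Classical in
theorem exists_G [Fintype α] (rk : α → ℕ) : ∃ g : α → AB ℤ,
    (∀ p : TPel α, PsiRel ℤ (TPlt α) (TPrk α rk) (some p) none = g p.1.2) ∧
    ∀ y, g y = ev ℤ ^ (rk (⊤ : α) - rk y) + ∑ w, if y < w then
      intCard y w • (ev ℤ ^ (rk w - rk y - 1) * bv ℤ * g w) else 0 := by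
  obtain ⟨g, hg⟩ : ∃ g : α → AB ℤ, ∀ y, g y = PsiRel ℤ (TPlt α) (TPrk α rk)
    (some ⟨((⊥ : WithBot α), y), WithBot.bot_lt_coe _⟩) none := ⟨_, fun y => rfl⟩
  have key : ∀ y : α, ∀ p : TPel α, p.1.2 = y →
      PsiRel ℤ (TPlt α) (TPrk α rk) (some p) none =
      ev ℤ ^ (rk (⊤ : α) - rk y) + ∑ w, if y < w then
      intCard y w • (ev ℤ ^ (rk w - rk y - 1) * bv ℤ * g w) else 0 := by
    intro y
    induction y using WellFoundedGT.induction with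
    | ind y ih =>
      rintro p rfl
      have ih' : ∀ q : TPel α, p.1.2 < q.1.2 →
          PsiRel ℤ (TPlt α) (TPrk α rk) (some q) none = g q.1.2 := by
        intro q hq
        rw [hg, ih _ hq q rfl, ih _ hq ⟨((⊥ : WithBot α), q.1.2), WithBot.bot_lt_coe _⟩ rfl]
      rw [Psi_rec]
      congr 1
      rw [← Finset.sum_filter, ← Finset.sum_fiberwise _ (fun q : TPel α => q.1.2)]
      refine Finset.sum_congr rfl fun w _ => ?_
      rw [Finset.filter_filter]
      by_cases hw : p.1.2 < w
      · rw [if_pos hw, ← fiber_card α p w hw, ← Finset.sum_const]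
        refine Finset.sum_congr rfl fun q hq => ?_
        simp only [Finset.mem_filter, Finset.mem_univ, true_and] at hq
        obtain ⟨hq1, rfl⟩ := hq
        rw [ih' q hw]
      · rw [if_neg hw]
        refine Finset.sum_eq_zero fun q hq => ?_
        simp only [Finset.mem_filter, Finset.mem_univ, true_and, TPlt_some_iff] at hq
        obtain ⟨hq1, rfl⟩ := hq
        exact absurd hq1.1 hw
  refine ⟨g, fun p => ?_, fun y => ?_⟩
  · rw [hg, key _ p rfl, key _ ⟨((⊥ : WithBot α), p.1.2), WithBot.bot_lt_coe _⟩ rfl]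
  · exact (hg y).trans (key y ⟨((⊥ : WithBot α), y), WithBot.bot_lt_coe _⟩ rfl)

end TOrder

theorem tchebyshev_c2d_index
    (α : Type) [Fintype α] [PartialOrder α] [BoundedOrder α]
    (rk : α → ℕ) (hrk : IsRankFun α rk) (heu : IsEulerian α rk) :
    PsiRel ℤ (TPlt α) (TPrk α rk) (TPbot α) (TPtop α) ∈
      Subring.closure ({cv ℤ, 2 * dv ℤ} : Set (AB ℤ)) := by
  classical
  obtain ⟨g, hg1, hg2⟩ := exists_G α rk
  have hc : cv ℤ ∈ Subring.closure ({cv ℤ, 2 * dv ℤ} : Set (AB ℤ)) :=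
    Subring.subset_closure (by simp)
  have hd : 2 * dv ℤ ∈ Subring.closure ({cv ℤ, 2 * dv ℤ} : Set (AB ℤ)) :=
    Subring.subset_closure (by simp)
  have he : ev ℤ * ev ℤ ∈ Subring.closure ({cv ℤ, 2 * dv ℤ} : Set (AB ℤ)) := by
    have h : ev ℤ * ev ℤ = cv ℤ * cv ℤ - 2 * dv ℤ := by
      unfold ev cv dv
      noncomm_ring
    rw [h]
    exact Subring.sub_mem _ (Subring.mul_mem _ hc hc) hd
  have hc' : ev ℤ + 2 * bv ℤ ∈ Subring.closure ({cv ℤ, 2 * dv ℤ} : Set (AB ℤ)) := by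
    have h : ev ℤ + 2 * bv ℤ = cv ℤ := by
      unfold ev cv
      noncomm_ring
    rw [h]
    exact hc
  have h := hg1 ⟨((⊥ : WithBot α), (⊥ : α)), WithBot.bot_lt_coe _⟩
  change PsiRel ℤ (TPlt α) (TPrk α rk) (some ⟨((⊥ : WithBot α), (⊥ : α)), WithBot.bot_lt_coe _⟩)
    none ∈ _
  rw [h]
  exact core_mem (ev ℤ) hrk heu (bv ℤ) _ he hc' g hg2 ⊥

end Tcheb
end
end

section
/- For every ab-polynomial u ∈ ℤ⟨a,b⟩, the Tchebyshev transform satisfies T((a−b)·u) = (a−b)·T(u); consequently T((c²−2d)·u) = (c²−2d)·T(u), where c = a + b and d = ab + ba. -/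
open scoped TensorProduct

noncomputable section

namespace Tcheb

section Helpers

variable (R : Type) [CommRing R]

/-! ### Helper lemmas -/

theorem onBasis_word {M : Type} [AddCommMonoid M] [Module R M] (f : List Bool → M)
    (l : List Bool) : onBasis R f (word R l) = f l := by
  simp [onBasis, word, MonoidAlgebra.of, MonoidAlgebra.coeffLinearEquiv]

theorem word_cons (x : Bool) (l : List Bool) : word R (x :: l) = word R [x] * word R l := by
  rw [word, word, word, ← map_mul]
  rfl

theorem Amap_word_cons (x : Bool) (l : List Bool) :
    Amap R (word R (x :: l)) = (if x then 1 else 0) * Amap R (word R l) := by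
  rw [word_cons, map_mul]
  congr 1
  simp [Amap, word]

theorem Amap_word_nil : Amap R (word R []) = 1 := by
  simp [Amap, word]

theorem Cmap_word (w : List Bool) : Cmap R (word R w) = 2 * Amap R (word R w) +
    ∑ i ∈ Finset.range w.length,
      Amap R (word R (w.take i)) * Amap R (word R (w.drop (i + 1))) := by
  simp [Cmap, Delta, onBasis_word]

theorem Cmap_sub (s : List Bool) : Cmap R (word R (true :: s)) - Cmap R (word R (false :: s)) =
    Cmap R (word R s) := by
  simp only [Cmap_word, List.length_cons, Finset.sum_range_succ', List.take_succ_cons,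
    List.drop_succ_cons, Amap_word_cons]
  simp
  ring

theorem kappa_sub (s : List Bool) : kappa R (word R (true :: s)) - kappa R (word R (false :: s)) =
    ev R * kappa R (word R s) := by
  simp [kappa, onBasis_word, Amap_word_cons, pow_succ']

theorem nu_sub (s : List Bool) : nuMap R (word R (true :: s)) - nuMap R (word R (false :: s)) =
    ev R * nuMap R (word R s) := by
  simp only [nuMap, onBasis_word, List.length_cons]
  rw [← sub_smul, Cmap_sub, pow_succ', mul_smul_comm]

theorem chainProd_sub (s : List Bool) (rest : List (List Bool)) :
    chainProd R ((true :: s) :: rest) - chainProd R ((false :: s) :: rest) =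
      ev R * chainProd R (s :: rest) := by
  cases rest with
  | nil => simpa [chainProd] using kappa_sub R s
  | cons t r =>
    simp only [chainProd]
    rw [← sub_mul, ← sub_mul, nu_sub]
    simp only [mul_assoc]

theorem segments_zero (x : Bool) (w : List Bool) (cuts : List ℕ) :
    segments (x :: w) (0 :: cuts.map (· + 1)) = [] :: segments w cuts := by
  rw [segments]
  simp [Function.comp_def]

theorem segments_succ (w : List Bool) (cuts : List ℕ) :
    ∃ s rest, segments w cuts = s :: rest ∧
      ∀ x : Bool, segments (x :: w) (cuts.map (· + 1)) = (x :: s) :: rest := by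
  cases cuts with
  | nil => exact ⟨w, [], by simp [segments], by simp [segments]⟩
  | cons i r =>
    refine ⟨w.take i, _, by rw [segments], fun x => ?_⟩
    rw [List.map_cons, segments]
    simp [Function.comp_def]

theorem sum_cuts {M : Type} [AddCommMonoid M] (n : ℕ) (f : List ℕ → M) :
    ∑ S : Finset (Fin (n + 1)), f ((S.sort (· ≤ ·)).map Fin.val) =
      ∑ S : Finset (Fin n), f (((S.sort (· ≤ ·)).map Fin.val).map (· + 1)) +
      ∑ S : Finset (Fin n), f (0 :: ((S.sort (· ≤ ·)).map Fin.val).map (· + 1)) := by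
  have hs : ∀ S : Finset (Fin n), (S.map (Fin.succEmb n)).sort (· ≤ ·) =
      (S.sort (· ≤ ·)).map Fin.succ := fun S =>
    (Finset.map_sort (r := (· ≤ ·)) (r' := (· ≤ ·)) (Fin.succEmb n) S
      (fun a _ b _ => by simp)).symm
  have h0 : ∀ S : Finset (Fin n), (0 : Fin (n + 1)) ∉ S.map (Fin.succEmb n) := by
    intro S; simp
  have hu : (Finset.univ : Finset (Finset (Fin (n + 1)))) =
      (insert 0 (Finset.univ.map (Fin.succEmb n))).powerset := by
    rw [← Finset.powerset_univ]
    congr 1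
    ext i
    refine Fin.cases ?_ (fun j => ?_) i <;> simp
  have hp : (Finset.univ.map (Fin.succEmb n)).powerset =
      (Finset.univ : Finset (Finset (Fin n))).map
        (Finset.mapEmbedding (Fin.succEmb n)).toEmbedding := by
    ext T
    simp only [Finset.mem_powerset, Finset.subset_map_iff, Finset.mem_map, Finset.mem_univ,
      true_and, Finset.subset_univ]
    constructor <;> rintro ⟨u, hu⟩ <;> exact ⟨u, hu.symm⟩
  rw [hu, Finset.sum_powerset_insert (h0 _), hp, Finset.sum_map, Finset.sum_map]
  congr 1
  · refine Finset.sum_congr rfl fun S _ => ?_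
    simp [hs, Function.comp_def, Finset.mapEmbedding_apply]
  · refine Finset.sum_congr rfl fun S _ => ?_
    simp only [RelEmbedding.coe_toEmbedding, Finset.mapEmbedding_apply]
    rw [Finset.sort_insert _ (fun b _ => Fin.zero_le b) (h0 S), hs]
    simp [Function.comp_def]

theorem Tmap_sub (w : List Bool) : Tmap R (word R (true :: w)) - Tmap R (word R (false :: w)) =
    ev R * Tmap R (word R w) := by
  simp only [Tmap, onBasis_word]
  have h : ∀ x : Bool, ∑ S : Finset (Fin (x :: w).length),
      chainProd R (segments (x :: w) ((S.sort (· ≤ ·)).map Fin.val)) = _ :=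
    fun x => sum_cuts w.length (fun c => chainProd R (segments (x :: w) c))
  rw [h true, h false]
  simp only [segments_zero]
  rw [add_sub_add_right_eq_sub, ← Finset.sum_sub_distrib, Finset.mul_sum]
  refine Finset.sum_congr rfl fun S _ => ?_
  obtain ⟨s, rest, h1, h2⟩ := segments_succ w ((S.sort (· ≤ ·)).map Fin.val)
  rw [h1, h2, h2, chainProd_sub]

theorem Tmap_ev_mul (u : AB R) : Tmap R (ev R * u) = ev R * Tmap R u := by
  induction u using MonoidAlgebra.induction_on with
  | of m =>
    have := Tmap_sub R m.toList
    rw [word_cons, word_cons R false, ← map_sub, ← sub_mul] at this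
    exact this
  | add f g hf hg => rw [mul_add, map_add, hf, hg, map_add, mul_add]
  | smul r f hf => rw [mul_smul_comm, map_smul, hf, map_smul, mul_smul_comm]

theorem ev_sq : cv R ^ 2 - 2 * dv R = ev R * ev R := by
  simp only [cv, dv, ev]
  noncomm_ring

end Helpers

theorem tchebyshev_commutes_with_e (u : AB ℤ) :
    Tmap ℤ (ev ℤ * u) = ev ℤ * Tmap ℤ u ∧
    Tmap ℤ ((cv ℤ ^ 2 - 2 * dv ℤ) * u) = (cv ℤ ^ 2 - 2 * dv ℤ) * Tmap ℤ u := by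
  refine ⟨Tmap_ev_mul ℤ u, ?_⟩
  rw [ev_sq, mul_assoc, Tmap_ev_mul, Tmap_ev_mul, mul_assoc]

end Tcheb
end
end
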